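/- Let Z₁,…,Z_N be i.i.d. real random variables with law ν such that |Z₁| < ∞ ν-almost surely and Var[Z₁] > 0, let Λ(λ) := log E[e^{λZ₁}], and let Ŝ_N := (1/N)Σ_{n=1}^N Z_n with law μ_N. Suppose q_N ∈ ℝ and η_N > 0 are such that Λ is finite in a neighborhood of η_N and Λ'(η_N) = q_N. Define the tilted law ν̃_N by dν̃_N/dν(z) := e^{z·η_N − Λ(η_N)}, the Fenchel–Legendre transform Λ*(q_N) := sup_{λ∈ℝ}(λ·q_N − Λ(λ)), and m_{3,N} := E_{ν̃_N}[ |Z₁ − Λ'(η_N)|³ ]. Then for every positive integer N: μ_N([q_N, ∞)) ≤ e^{−N·Λ*(q_N)} · N^{−1/2} · ( m_{3,N}/Λ''(η_N)^{3/2} + 1/( η_N·√(2π·Λ''(η_N)) ) ). -/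

import Mathlib

open Real MeasureTheory ProbabilityTheory

/-!
Let `P` be the law `ν` tilted by `η`; its mean is `q` and its variance is `σ² = Λ''(η)`. Tilting
turns the probability to be bounded into `exp (-N (η q - Λ(η)))` times the integral of
`exp (-η ∑ (zᵢ - q))` over `{∑ (zᵢ - q) ≥ 0}` under the `N`-fold product of `P`, and since `Λ` lies
above its tangent line at `η`, `Λ*(q) ≤ η q - Λ(η)`.

The sharp constants come from the Graham–Vaaler majorant of the truncated exponential
`x ↦ exp (-l x) 1_{x ≥ 0}`. It is band-limited, and its Fourier transform at frequency `t` has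
modulus at most `(1 + 1 / l) (1 - |t|)`, so the integral of the truncated exponential against a
probability measure with characteristic function `φ` is at most
`2 (1 + 1 / l) ∫₀¹ (1 - t) |φ(2πt)| dt`. Write `φ_P` and `ρ` for the characteristic function and
the third absolute central moment of `P`. Symmetrization and a cubic upper bound for the cosine
give `|φ_P(t)|² ≤ 1 - σ² t² + (ρ + σ³) |t|³ / (2 √(2π))`. Choose the bandwidth proportional to
`σ² / ρ`. Then the integral of `(1 - t) |φ_P|^N` over `[0, 1]` is at most the Gaussian one: the far
part of the interval, where the cubic term weakens the bound on `|φ_P|`, can be folded onto the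
near part.
-/

/-! ### The modulus of a characteristic function -/

theorem cos_le_one_sub_sq_add_abs_pow_three (x : ℝ) :
    cos x ≤ 1 - x ^ 2 / 2 + |x| ^ 3 / (4 * √(2 * π)) := by
  wlog hx : 0 ≤ x generalizing x
  · simpa using this (-x) (by linarith)
  have hconst : 997 / 10000 * x ^ 3 ≤ |x| ^ 3 / (4 * √(2 * π)) := by
    have hsqrt : √(2 * π) ≤ 2.5067 := by
      rw [sqrt_le_left (by norm_num)]
      linarith [pi_lt_d4]
    rw [abs_of_nonneg hx, le_div_iff₀ (by positivity)]
    nlinarith [pow_nonneg hx 3]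
  suffices h : cos x ≤ 1 - x ^ 2 / 2 + 997 / 10000 * x ^ 3 by linarith
  rcases le_or_gt x 2 with hx2 | hx2
  · have hcos : cos x = 1 - 2 * sin (x / 2) ^ 2 := by
      rw [← cos_sq_add_sin_sq (x / 2), ← mul_div_cancel₀ x two_ne_zero, cos_two_mul']
      ring_nf
    have hsin : (x / 2 - (x / 2) ^ 3 / 6) ^ 2 ≤ sin (x / 2) ^ 2 := by
      refine pow_le_pow_left₀ ?_ (sin_ge_sub_cube (by linarith)) 2
      nlinarith [mul_nonneg hx hx, mul_nonneg (mul_nonneg hx hx) hx,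
        mul_nonneg hx (sub_nonneg.2 hx2)]
    nlinarith [pow_nonneg hx 3, mul_nonneg (pow_nonneg hx 3) (sub_nonneg.2 hx2),
      sq_nonneg (x ^ 3)]
  -- Beyond `2` the parabola `(x - π) ^ 2 / 2 - 1` already lies below the cubic.
  · have hcos := one_sub_sq_div_two_le_cos (x := x - π)
    rw [cos_sub_pi] at hcos
    have hpi : 2 - 3.1415 ^ 2 / 2 + 3.1415 * x - 0.0001 * 3.1416 ≤ 2 - π ^ 2 / 2 + π * x := by
      nlinarith [pi_gt_d4, pi_lt_d4]
    nlinarith [mul_nonneg hx (sq_nonneg (x - 4.17)), sq_nonneg (x - 4.17)]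

theorem abs_sub_pow_three_le (x y : ℝ) :
    |x - y| ^ 3 ≤ |x| ^ 3 + |y| ^ 3 + |x| * y ^ 2 + x ^ 2 * |y|
      - 2 * (x * |x|) * y - 2 * x * (y * |y|) := by
  have hx : |x| ^ 3 = |x| * x ^ 2 := by rw [pow_succ', sq_abs]
  have hy : |y| ^ 3 = |y| * y ^ 2 := by rw [pow_succ', sq_abs]
  calc |x - y| ^ 3 = |x - y| * (x - y) ^ 2 := by rw [pow_succ', sq_abs]
    _ ≤ (|x| + |y|) * (x - y) ^ 2 := by gcongr; exact abs_sub x y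
    _ = _ := by rw [hx, hy]; ring

section Symmetrization

variable {Ω : Type*} [MeasurableSpace Ω] {μ : Measure Ω} [IsProbabilityMeasure μ] {Y : Ω → ℝ}

theorem integral_sq_sub_prod (hY : MemLp Y 2 μ) (hY0 : ∫ ω, Y ω ∂μ = 0) :
    ∫ z, (Y z.1 - Y z.2) ^ 2 ∂(μ.prod μ) = 2 * ∫ ω, Y ω ^ 2 ∂μ := by
  have hint : Integrable Y μ := hY.integrable (by norm_num)
  have hfst := hY.integrable_sq.comp_fst μ
  have hsnd := hY.integrable_sq.comp_snd μ
  have hcross : Integrable (fun z : Ω × Ω ↦ Y z.1 * Y z.2) (μ.prod μ) := hint.mul_prod hint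
  calc ∫ z, (Y z.1 - Y z.2) ^ 2 ∂(μ.prod μ)
      = ∫ z, (Y z.1 ^ 2 + Y z.2 ^ 2 - 2 * (Y z.1 * Y z.2)) ∂(μ.prod μ) := by congr with z; ring
    _ = 2 * ∫ ω, Y ω ^ 2 ∂μ := by
      rw [integral_sub (by fun_prop) (hcross.const_mul 2),
        integral_add (by fun_prop) (by fun_prop),
        integral_const_mul, integral_prod_mul, integral_fun_fst (fun ω ↦ Y ω ^ 2),
        integral_fun_snd (fun ω ↦ Y ω ^ 2), hY0]
      simp only [probReal_univ, one_smul]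
      ring

theorem integral_abs_sub_pow_three_prod_le (hY : MemLp Y 3 μ) (hY0 : ∫ ω, Y ω ∂μ = 0) :
    ∫ z, |Y z.1 - Y z.2| ^ 3 ∂(μ.prod μ) ≤
      2 * ((∫ ω, |Y ω| ^ 3 ∂μ) + (∫ ω, |Y ω| ∂μ) * ∫ ω, Y ω ^ 2 ∂μ) := by
  have h1 : Integrable Y μ := hY.integrable (by norm_num)
  have h2 : Integrable (fun ω ↦ Y ω ^ 2) μ := (hY.mono_exponent (by norm_num)).integrable_sq
  have h3 : Integrable (fun ω ↦ |Y ω| ^ 3) μ := hY.integrable_norm_pow (by norm_num)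
  have hsigned : Integrable (fun ω ↦ Y ω * |Y ω|) μ :=
    h2.congr' (by fun_prop) (.of_forall fun ω ↦ by simp [sq])
  have hfst := h3.comp_fst μ
  have hsnd := h3.comp_snd μ
  have h12 := h1.abs.mul_prod h2
  have h21 := h2.mul_prod h1.abs
  have hs1 := (hsigned.mul_prod h1).const_mul 2
  have hs2 := (h1.mul_prod hsigned).const_mul 2
  calc ∫ z, |Y z.1 - Y z.2| ^ 3 ∂(μ.prod μ)
      ≤ ∫ z, (|Y z.1| ^ 3 + |Y z.2| ^ 3 + |Y z.1| * Y z.2 ^ 2 + Y z.1 ^ 2 * |Y z.2|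
          - 2 * (Y z.1 * |Y z.1| * Y z.2) - 2 * (Y z.1 * (Y z.2 * |Y z.2|))) ∂(μ.prod μ) := by
        refine integral_mono_of_nonneg (.of_forall fun z ↦ by positivity) (by fun_prop)
          (.of_forall fun z ↦ ?_)
        linarith [abs_sub_pow_three_le (Y z.1) (Y z.2)]
    _ = _ := by
        rw [integral_sub (by fun_prop) (by fun_prop), integral_sub (by fun_prop) (by fun_prop),
          integral_add (by fun_prop) (by fun_prop), integral_add (by fun_prop) (by fun_prop),
          integral_add (by fun_prop) (by fun_prop), integral_const_mul, integral_const_mul,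
          integral_prod_mul (fun ω ↦ |Y ω|) (fun ω ↦ Y ω ^ 2),
          integral_prod_mul (fun ω ↦ Y ω ^ 2) (fun ω ↦ |Y ω|),
          integral_prod_mul (fun ω ↦ Y ω * |Y ω|) Y, integral_prod_mul Y (fun ω ↦ Y ω * |Y ω|),
          integral_fun_fst (fun ω ↦ |Y ω| ^ 3), integral_fun_snd (fun ω ↦ |Y ω| ^ 3), hY0]
        simp only [probReal_univ, one_smul]
        ring

theorem integral_abs_le_sqrt_integral_sq (hY : MemLp Y 2 μ) :
    ∫ ω, |Y ω| ∂μ ≤ √(∫ ω, Y ω ^ 2 ∂μ) := by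
  have hvar := variance_nonneg |Y| μ
  rw [variance_eq_sub hY.abs] at hvar
  refine le_sqrt_of_sq_le ?_
  simpa using hvar

theorem sqrt_integral_sq_pow_three_le (hY : MemLp Y 3 μ) :
    √(∫ ω, Y ω ^ 2 ∂μ) ^ 3 ≤ ∫ ω, |Y ω| ^ 3 ∂μ := by
  set σ := √(∫ ω, Y ω ^ 2 ∂μ)
  have hσ_sq : σ ^ 2 = ∫ ω, Y ω ^ 2 ∂μ := sq_sqrt (by positivity)
  have h2 : Integrable (fun ω ↦ Y ω ^ 2) μ := (hY.mono_exponent (by norm_num)).integrable_sq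
  calc σ ^ 3 = ∫ ω, (3 / 2 * σ * Y ω ^ 2 - σ ^ 3 / 2) ∂μ := by
        rw [integral_sub (by fun_prop) (by fun_prop), integral_const_mul, ← hσ_sq]
        simp only [integral_const, probReal_univ, one_smul]
        ring
    _ ≤ ∫ ω, |Y ω| ^ 3 ∂μ := by
      refine integral_mono (by fun_prop) (hY.integrable_norm_pow (by norm_num)) fun ω ↦ ?_
      have : 0 ≤ (|Y ω| - σ) ^ 2 * (2 * |Y ω| + σ) := by positivity
      change _ ≤ |Y ω| ^ 3
      rw [← sq_abs (Y ω)]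
      linarith

end Symmetrization

section CharFun

variable {P : Measure ℝ} [IsProbabilityMeasure P]

theorem sq_norm_charFun_eq_integral_cos_sub (t : ℝ) :
    ‖charFun P t‖ ^ 2 = ∫ z, cos (t * (z.1 - z.2)) ∂(P.prod P) := by
  have hint : Integrable (fun z : ℝ × ℝ ↦ Complex.exp ((t * (z.1 - z.2) : ℝ) * Complex.I))
      (P.prod P) :=
    .of_bound (C := 1) (by fun_prop) (.of_forall fun z ↦ (Complex.norm_exp_ofReal_mul_I _).le)
  have hprod : ((‖charFun P t‖ ^ 2 : ℝ) : ℂ) =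
      ∫ z, Complex.exp ((t * (z.1 - z.2) : ℝ) * Complex.I) ∂(P.prod P) := by
    calc ((‖charFun P t‖ ^ 2 : ℝ) : ℂ) = charFun P t * charFun P (-t) := by
          rw [charFun_neg, Complex.mul_conj, Complex.normSq_eq_norm_sq]
      _ = _ := by
          rw [charFun_apply_real, charFun_apply_real, ← integral_prod_mul]
          congr with z
          rw [← Complex.exp_add]
          push_cast
          ring_nf
  rw [← Complex.ofReal_re (‖charFun P t‖ ^ 2), hprod, ← RCLike.re_eq_complex_re,
    ← integral_re hint]
  simp only [RCLike.re_eq_complex_re, Complex.exp_ofReal_mul_I_re]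

theorem sq_norm_charFun_le (hP : MemLp id 3 P) (t : ℝ) :
    ‖charFun P t‖ ^ 2 ≤ 1 - Var[id; P] * t ^ 2
      + ((∫ x, |x - P[id]| ^ 3 ∂P) + √Var[id; P] ^ 3) * |t| ^ 3 / (2 * √(2 * π)) := by
  set Y : ℝ → ℝ := fun x ↦ x - P[id] with hYdef
  have hY : MemLp Y 3 P := hP.sub (memLp_const _)
  have hY2 : MemLp Y 2 P := hY.mono_exponent (by norm_num)
  have hY0 : ∫ x, Y x ∂P = 0 := by
    simpa [hYdef, average_eq_integral] using integral_sub_average P (id : ℝ → ℝ)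
  have hvar : Var[id; P] = ∫ x, Y x ^ 2 ∂P := variance_eq_integral (by fun_prop)
  set ρ := ∫ x, |Y x| ^ 3 ∂P
  set σ := √Var[id; P] with hσ
  have hcos : ∀ z : ℝ × ℝ, cos (t * (z.1 - z.2)) ≤ 1 - t ^ 2 / 2 * (Y z.1 - Y z.2) ^ 2
      + |t| ^ 3 / (4 * √(2 * π)) * |Y z.1 - Y z.2| ^ 3 := fun z ↦ by
    have := cos_le_one_sub_sq_add_abs_pow_three (t * (z.1 - z.2))
    rw [abs_mul, mul_pow, mul_pow] at this
    simp only [hYdef, sub_sub_sub_cancel_right]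
    exact this.trans_eq (by ring)
  have hint2 : Integrable (fun z : ℝ × ℝ ↦ (Y z.1 - Y z.2) ^ 2) (P.prod P) :=
    ((hY2.comp_fst P).sub (hY2.comp_snd P)).integrable_sq
  have hint3 : Integrable (fun z : ℝ × ℝ ↦ |Y z.1 - Y z.2| ^ 3) (P.prod P) :=
    ((hY.comp_fst P).sub (hY.comp_snd P)).integrable_norm_pow (by norm_num)
  calc ‖charFun P t‖ ^ 2 = ∫ z, cos (t * (z.1 - z.2)) ∂(P.prod P) :=
        sq_norm_charFun_eq_integral_cos_sub t
    _ ≤ ∫ z, (1 - t ^ 2 / 2 * (Y z.1 - Y z.2) ^ 2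
          + |t| ^ 3 / (4 * √(2 * π)) * |Y z.1 - Y z.2| ^ 3) ∂(P.prod P) :=
        integral_mono (.of_bound (C := 1) (by fun_prop) (.of_forall fun z ↦ abs_cos_le_one _))
          (by fun_prop) hcos
    _ = 1 - t ^ 2 / 2 * (2 * Var[id; P])
          + |t| ^ 3 / (4 * √(2 * π)) * ∫ z, |Y z.1 - Y z.2| ^ 3 ∂(P.prod P) := by
        rw [integral_add (by fun_prop) (by fun_prop), integral_sub (by fun_prop) (by fun_prop),
          integral_const_mul, integral_const_mul, integral_sq_sub_prod hY2 hY0, hvar]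
        simp
    _ ≤ 1 - t ^ 2 / 2 * (2 * Var[id; P]) + |t| ^ 3 / (4 * √(2 * π)) * (2 * (ρ + σ ^ 3)) := by
        have hmean : (∫ x, |Y x| ∂P) * ∫ x, Y x ^ 2 ∂P ≤ σ ^ 3 := by
          have hσ_sq : σ ^ 2 = ∫ x, Y x ^ 2 ∂P := by rw [hσ, sq_sqrt (variance_nonneg _ _), hvar]
          rw [← hσ_sq, pow_succ' σ 2, hσ, hvar]
          gcongr
          exact integral_abs_le_sqrt_integral_sq hY2
        gcongr
        exact (integral_abs_sub_pow_three_prod_le hY hY0).trans (by gcongr)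
    _ = _ := by ring

end CharFun

/-! ### A Gaussian bound for integrals of powers -/

theorem integral_deriv_mul_exp_neg_sq_le {W W' : ℝ → ℝ} (hW : ∀ x, HasDerivAt W (W' x) x)
    (hW' : Continuous W') {b k : ℝ} (h0 : W 0 = 0) (hb : 0 ≤ W b) (hk : 0 < k) :
    ∫ x in 0..b, W' x * exp (-k * W x ^ 2) ≤ √(π / k) / 2 := by
  calc ∫ x in 0..b, W' x * exp (-k * W x ^ 2)
      = ∫ w in W 0..W b, exp (-k * w ^ 2) := by
        simp_rw [mul_comm (W' _)]
        exact intervalIntegral.integral_comp_mul_deriv (g := fun w ↦ exp (-k * w ^ 2))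
          (fun x _ ↦ hW x) hW'.continuousOn (by fun_prop)
    _ = ∫ w in Set.Ioc 0 (W b), exp (-k * w ^ 2) := by
        rw [h0, intervalIntegral.integral_of_le hb]
    _ ≤ ∫ w in Set.Ioi 0, exp (-k * w ^ 2) :=
        setIntegral_mono_set (integrable_exp_neg_mul_sq hk).integrableOn
          (.of_forall fun _ ↦ (exp_pos _).le) (.of_forall fun _ hw ↦ hw.1)
    _ = √(π / k) / 2 := integral_gaussian_Ioi k

theorem pow_le_exp_neg_of_sq_le {a y : ℝ} (ha : 0 ≤ a) (h : a ^ 2 ≤ exp (-(2 * y))) (n : ℕ) :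
    a ^ n ≤ exp (-(n * y)) := by
  have ha' : a ≤ exp (-y) := by
    refine le_of_sq_le_sq (h.trans_eq ?_) (exp_pos _).le
    rw [← exp_nat_mul]
    ring_nf
  calc a ^ n ≤ exp (-y) ^ n := pow_le_pow_left₀ ha ha' n
    _ = exp (-(n * y)) := by rw [← exp_nat_mul, mul_neg]

-- Nonnegative coefficients in the Bernstein basis certify the polynomial inequalities below.
theorem sub_pow_mul_sub_pow_nonneg {a b x : ℝ} (hx : x ∈ Set.Icc a b) (i j : ℕ) :
    0 ≤ (x - a) ^ i * (b - x) ^ j :=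
  mul_nonneg (pow_nonneg (sub_nonneg.2 hx.1) i) (pow_nonneg (sub_nonneg.2 hx.2) j)

theorem one_sub_add_sq_sub_cube_le_exp_neg {z : ℝ} (h0 : 0 ≤ z) (h1 : z ≤ 8 / 5) :
    1 - z + 9 / 20 * z ^ 2 - 1 / 10 * z ^ 3 ≤ exp (-z) := by
  obtain ⟨t, rfl⟩ : ∃ t, z = 2 * t := ⟨z / 2, by ring⟩
  have ht0 : 0 ≤ t := by linarith
  have ht1 : t ≤ 4 / 5 := by linarith
  set p := 1 - t + t ^ 2 / 2 - t ^ 3 / 6 - 5 / 96 * t ^ 4 with hp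
  have htaylor : p ≤ exp (-t) := by
    have h := abs_le.1 (exp_bound (x := -t) (n := 4)
      (by rw [abs_neg, abs_of_nonneg ht0]; linarith) (by norm_num))
    rw [abs_neg, abs_of_nonneg ht0] at h
    norm_num [Finset.sum_range_succ, Nat.factorial] at h
    linarith [h.1]
  have hbern := sub_pow_mul_sub_pow_nonneg (⟨ht0, ht1⟩ : t ∈ Set.Icc 0 (4 / 5))
  have hp0 : 0 ≤ p := by
    linarith [hbern 0 4, hbern 1 3, hbern 2 2, hbern 3 1, hbern 4 0]
  calc 1 - 2 * t + 9 / 20 * (2 * t) ^ 2 - 1 / 10 * (2 * t) ^ 3 ≤ p ^ 2 := by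
        rw [hp]
        linarith [hbern 2 6, hbern 3 5, hbern 4 4, hbern 5 3, hbern 6 2, hbern 7 1, hbern 8 0]
    _ ≤ exp (-t) ^ 2 := pow_le_pow_left₀ hp0 htaylor 2
    _ = exp (-(2 * t)) := by rw [← exp_nat_mul]; ring_nf

/-- The change of variable that folds the far part `[13/20, 1]` of the unit interval onto the
near part `[0, 13/20]`. -/
noncomputable def foldMap (x : ℝ) : ℝ := 1 - x ^ 2 * (1 - x / 4)

theorem hasDerivAt_foldMap (x : ℝ) : HasDerivAt foldMap (-(2 * x - 3 / 4 * x ^ 2)) x :=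
  (((hasDerivAt_pow 2 x).fun_mul (((hasDerivAt_id' x).div_const 4).const_sub 1)).const_sub
    1).congr_deriv (by norm_num; ring)

@[fun_prop]
theorem continuous_foldMap : Continuous foldMap :=
  continuous_iff_continuousAt.2 fun x ↦ (hasDerivAt_foldMap x).continuousAt

theorem foldMap_mem_Icc {x : ℝ} (hx : x ∈ Set.Icc 0 (13 / 20)) : foldMap x ∈ Set.Icc 0 1 := by
  have hx4 : 0 ≤ 1 - x / 4 := by linarith [hx.2]
  rw [foldMap]
  constructor
  · nlinarith [hx.1, hx.2]
  · nlinarith [mul_nonneg (sq_nonneg x) hx4]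

theorem intervalIntegral_le_integral_add_foldMap {h : ℝ → ℝ} (hh : Continuous h)
    (h0 : ∀ u ∈ Set.Icc 0 1, 0 ≤ h u) :
    ∫ u in 0..1, h u ≤ ∫ x in 0..(13 / 20),
      (h x + (2 * x - 3 / 4 * x ^ 2) * h (foldMap x)) := by
  have hsub : ∫ u in foldMap (13 / 20)..1, h u =
      ∫ x in 0..(13 / 20), (2 * x - 3 / 4 * x ^ 2) * h (foldMap x) := by
    have := intervalIntegral.integral_deriv_smul_comp (a := 0) (b := 13 / 20) (g := h)
      (fun x _ ↦ hasDerivAt_foldMap x) (by fun_prop) hh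
    rw [intervalIntegral.integral_symm, show (1 : ℝ) = foldMap 0 by norm_num [foldMap], ← this,
      ← intervalIntegral.integral_neg]
    simp only [smul_eq_mul, Function.comp_apply, neg_mul, neg_neg]
  calc ∫ u in 0..1, h u = (∫ u in 0..(13 / 20), h u) + ∫ u in (13 / 20)..1, h u :=
        (intervalIntegral.integral_add_adjacent_intervals (hh.intervalIntegrable ..)
          (hh.intervalIntegrable ..)).symm
    _ ≤ (∫ u in 0..(13 / 20), h u) + ∫ u in foldMap (13 / 20)..1, h u := by
        gcongr
        refine intervalIntegral.integral_mono_interval (by norm_num [foldMap]) (by norm_num)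
          le_rfl ?_ (hh.intervalIntegrable ..)
        refine (ae_restrict_iff' measurableSet_Ioc).2 (.of_forall fun u hu ↦ h0 u ⟨?_, hu.2⟩)
        exact (le_trans (by norm_num [foldMap]) hu.1.le)
    _ = _ := by
        rw [hsub, ← intervalIntegral.integral_add (hh.intervalIntegrable ..)
          (Continuous.intervalIntegrable (by fun_prop) ..)]

/-- The phase whose derivative is the combined weight `(1 - x) + (1 - u) |du/dx|` of a point `x`
and its partner `u = foldMap x`. -/
noncomputable def foldedPhase (x : ℝ) : ℝ := x - x ^ 2 / 2 + (1 - foldMap x) ^ 2 / 2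

theorem hasDerivAt_foldedPhase (x : ℝ) : HasDerivAt foldedPhase
    (1 - x + (2 * x - 3 / 4 * x ^ 2) * (1 - foldMap x)) x :=
  (((hasDerivAt_id' x).fun_sub ((hasDerivAt_pow 2 x).div_const 2)).fun_add
    ((((hasDerivAt_foldMap x).const_sub 1).fun_pow 2).div_const 2)).congr_deriv (by norm_num; ring)

/-- A polynomial majorant of `foldedPhase ^ 2` on `[0, 13/20]`, of degree `6` instead of `12`. -/
noncomputable def foldedEnvelope (x : ℝ) : ℝ :=
  x ^ 2 - x ^ 3 + x ^ 4 / 4 + x ^ 5 - 3 / 4 * x ^ 6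

section Polynomial

variable {x r : ℝ}

theorem sq_foldedPhase_le (hx : x ∈ Set.Icc 0 (13 / 20)) :
    foldedPhase x ^ 2 ≤ foldedEnvelope x := by
  have h := sub_pow_mul_sub_pow_nonneg hx
  rw [foldedPhase, foldedEnvelope, foldMap]
  linarith [h 6 6, h 7 5, h 8 4, h 9 3, h 10 2, h 11 1, h 12 0]

theorem foldedEnvelope_le (hx : x ∈ Set.Icc 0 (13 / 20)) : foldedEnvelope x ≤ 254 / 1000 := by
  have h := sub_pow_mul_sub_pow_nonneg hx
  rw [foldedEnvelope]
  linarith [h 0 6, h 1 5, h 2 4, h 3 3, h 4 2, h 5 1, h 6 0]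

theorem foldedEnvelope_sub_sq_le (hx : x ∈ Set.Icc 0 (13 / 20)) (hr : r ∈ Set.Icc (1 / 2) 1) :
    foldedEnvelope x - (12 * r - 3) / 5 * foldedEnvelope x ^ 2 ≤
      x ^ 2 * (1 - (1 + r) * x / 2) := by
  have h := sub_pow_mul_sub_pow_nonneg hx
  have hhalf : foldedEnvelope x - 3 / 5 * foldedEnvelope x ^ 2 ≤ x ^ 2 * (1 - 3 / 4 * x) := by
    rw [foldedEnvelope]
    linarith [h 3 9, h 4 8, h 5 7, h 6 6, h 7 5, h 8 4, h 9 3, h 10 2, h 11 1, h 12 0]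
  have hone : foldedEnvelope x - 9 / 5 * foldedEnvelope x ^ 2 ≤ x ^ 2 * (1 - x) := by
    rw [foldedEnvelope]
    linarith [h 4 8, h 5 7, h 6 6, h 7 5, h 8 4, h 9 3, h 10 2, h 11 1, h 12 0]
  linarith [mul_le_mul_of_nonneg_left hhalf (sub_nonneg.2 hr.2),
    mul_le_mul_of_nonneg_left hone (sub_nonneg.2 hr.1)]

theorem foldedEnvelope_sub_sq_le_foldMap (hx : x ∈ Set.Icc 0 (13 / 20))
    (hr : r ∈ Set.Icc (1 / 2) 1) :
    foldedEnvelope x - (12 * r - 3) / 5 * foldedEnvelope x ^ 2 ≤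
      foldMap x ^ 2 * (1 - (1 + r) * foldMap x / 2) := by
  have h := sub_pow_mul_sub_pow_nonneg hx
  have hhalf : foldedEnvelope x - 3 / 5 * foldedEnvelope x ^ 2 ≤
      foldMap x ^ 2 * (1 - 3 / 4 * foldMap x) := by
    rw [foldedEnvelope, foldMap]
    linarith [h 0 12, h 1 11, h 2 10, h 3 9, h 4 8, h 5 7, h 6 6, h 7 5, h 8 4, h 9 3, h 10 2,
      h 11 1, h 12 0]
  have hone : foldedEnvelope x - 9 / 5 * foldedEnvelope x ^ 2 ≤
      foldMap x ^ 2 * (1 - foldMap x) := by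
    rw [foldedEnvelope, foldMap]
    linarith [h 3 9, h 4 8, h 5 7, h 6 6, h 7 5, h 8 4, h 9 3, h 10 2, h 11 1, h 12 0]
  linarith [mul_le_mul_of_nonneg_left hhalf (sub_nonneg.2 hr.2),
    mul_le_mul_of_nonneg_left hone (sub_nonneg.2 hr.1)]

end Polynomial

theorem one_sub_mul_sub_sq_le_exp_neg {r y : ℝ} (hr : r ∈ Set.Icc (1 / 2) 1) (hy0 : 0 ≤ y)
    (hy : y ≤ 254 / 1000) :
    1 - 2 * π * r ^ 2 * (y - (12 * r - 3) / 5 * y ^ 2) ≤ exp (-(2 * π * r ^ 2 * y)) := by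
  have hr2 : r ^ 2 ≤ 1 := pow_le_one₀ (by linarith [hr.1]) hr.2
  set z := 2 * π * r ^ 2 * y with hz
  have hz0 : 0 ≤ z := by positivity
  have hzr : z ≤ 8 / 5 * r ^ 2 := by
    have : 2 * π * y ≤ 2 * 3.1416 * (254 / 1000) := by gcongr; exact pi_lt_d4.le
    nlinarith
  have hcoeff : (12 * r - 3) / 5 ≤ 2 * π * (r ^ 2 * (9 / 20 - 4 / 25 * r ^ 2)) := by
    have hbern := sub_pow_mul_sub_pow_nonneg hr
    calc (12 * r - 3) / 5 ≤ 2 * 3.14 * (r ^ 2 * (9 / 20 - 4 / 25 * r ^ 2)) := by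
          linarith [hbern 0 4, hbern 1 3, hbern 2 2, hbern 3 1, hbern 4 0]
      _ ≤ _ := by
          gcongr
          · nlinarith
          · exact pi_gt_d2.le
  calc 1 - 2 * π * r ^ 2 * (y - (12 * r - 3) / 5 * y ^ 2)
      = 1 - z + 2 * π * r ^ 2 * y ^ 2 * ((12 * r - 3) / 5) := by rw [hz]; ring
    _ ≤ 1 - z + 2 * π * r ^ 2 * y ^ 2 * (2 * π * (r ^ 2 * (9 / 20 - 4 / 25 * r ^ 2))) := by gcongr
    _ = 1 - z + 9 / 20 * z ^ 2 - 1 / 10 * z ^ 2 * (8 / 5 * r ^ 2) := by rw [hz]; ring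
    _ ≤ 1 - z + 9 / 20 * z ^ 2 - 1 / 10 * z ^ 2 * z := by gcongr
    _ = 1 - z + 9 / 20 * z ^ 2 - 1 / 10 * z ^ 3 := by ring
    _ ≤ exp (-z) := one_sub_add_sq_sub_cube_le_exp_neg hz0 (by linarith)

theorem one_sub_le_exp_neg_sq_foldedPhase {x r c : ℝ} (hx : x ∈ Set.Icc 0 (13 / 20))
    (hr : r ∈ Set.Icc (1 / 2) 1)
    (hc : foldedEnvelope x - (12 * r - 3) / 5 * foldedEnvelope x ^ 2 ≤ c) :
    1 - 2 * π * r ^ 2 * c ≤ exp (-(2 * π * r ^ 2 * foldedPhase x ^ 2)) := by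
  have hle := sq_foldedPhase_le hx
  have hmax := foldedEnvelope_le hx
  have hg' : (12 * r - 3) / 5 ≤ 9 / 5 := by linarith [hr.2]
  have hy0 : 0 ≤ foldedPhase x ^ 2 := sq_nonneg _
  set y := foldedPhase x ^ 2
  have hmono : y - (12 * r - 3) / 5 * y ^ 2 ≤ c := by
    have : (12 * r - 3) / 5 * (foldedEnvelope x + y) ≤ 9 / 5 * (508 / 1000) :=
      mul_le_mul hg' (by linarith) (by linarith) (by norm_num)
    nlinarith
  calc 1 - 2 * π * r ^ 2 * c ≤ 1 - 2 * π * r ^ 2 * (y - (12 * r - 3) / 5 * y ^ 2) := by gcongr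
    _ ≤ _ := one_sub_mul_sub_sq_le_exp_neg hr hy0 (hle.trans hmax)

section Power

variable {F : ℝ → ℝ} {r : ℝ} {N : ℕ}

theorem integral_one_sub_mul_pow_le_of_half_le (hFc : Continuous F) (hF0 : ∀ u, 0 ≤ F u)
    (hr : r ∈ Set.Icc (1 / 2) 1) (hN : 0 < N)
    (hF : ∀ u ∈ Set.Icc 0 1, F u ^ 2 ≤ 1 - 2 * π * r ^ 2 * (u ^ 2 * (1 - (1 + r) * u / 2))) :
    ∫ u in 0..1, (1 - u) * F u ^ N ≤ √(π / (N * (π * r ^ 2))) / 2 := by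
  have hr0 : 0 < r := by linarith [hr.1]
  have hpow {u x : ℝ} (h : F u ^ 2 ≤ exp (-(2 * π * r ^ 2 * foldedPhase x ^ 2))) :
      F u ^ N ≤ exp (-(N * (π * r ^ 2)) * foldedPhase x ^ 2) :=
    (pow_le_exp_neg_of_sq_le (y := π * r ^ 2 * foldedPhase x ^ 2) (hF0 u)
      (by convert h using 3; ring) N).trans_eq (by ring_nf)
  calc ∫ u in 0..1, (1 - u) * F u ^ N
      ≤ ∫ x in 0..(13 / 20), ((1 - x) * F x ^ N +
          (2 * x - 3 / 4 * x ^ 2) * ((1 - foldMap x) * F (foldMap x) ^ N)) :=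
        intervalIntegral_le_integral_add_foldMap (h := fun u ↦ (1 - u) * F u ^ N) (by fun_prop)
          fun u hu ↦ mul_nonneg (sub_nonneg.2 hu.2) (pow_nonneg (hF0 u) N)
    _ ≤ ∫ x in 0..(13 / 20), (1 - x + (2 * x - 3 / 4 * x ^ 2) * (1 - foldMap x)) *
          exp (-(N * (π * r ^ 2)) * foldedPhase x ^ 2) := by
        have hphase : Continuous foldedPhase := by unfold foldedPhase; fun_prop
        refine intervalIntegral.integral_mono_on (by norm_num)
          (Continuous.intervalIntegrable (by fun_prop) ..)
          (Continuous.intervalIntegrable (by fun_prop) ..) fun x hx ↦ ?_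
        have hx1 : 0 ≤ 1 - x := by linarith [hx.2]
        have hdx : 0 ≤ 2 * x - 3 / 4 * x ^ 2 := by nlinarith [hx.1, hx.2]
        have hmem := foldMap_mem_Icc hx
        have hnear := hpow ((hF x ⟨hx.1, by linarith⟩).trans
          (one_sub_le_exp_neg_sq_foldedPhase hx hr (foldedEnvelope_sub_sq_le hx hr)))
        have hfar := hpow ((hF _ hmem).trans
          (one_sub_le_exp_neg_sq_foldedPhase hx hr (foldedEnvelope_sub_sq_le_foldMap hx hr)))
        rw [add_mul, mul_assoc (2 * x - 3 / 4 * x ^ 2)]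
        have := sub_nonneg.2 hmem.2
        gcongr
    _ ≤ _ := integral_deriv_mul_exp_neg_sq_le hasDerivAt_foldedPhase (by fun_prop)
        (by norm_num [foldedPhase, foldMap]) (by norm_num [foldedPhase, foldMap]) (by positivity)

theorem integral_one_sub_mul_pow_le_of_le_half (hFc : Continuous F) (hF0 : ∀ u, 0 ≤ F u)
    (hr0 : 0 < r) (hr : r ≤ 1 / 2) (hN : 0 < N)
    (hF : ∀ u ∈ Set.Icc 0 1, F u ^ 2 ≤ 1 - 2 * π * r ^ 2 * (u ^ 2 * (1 - (1 + r) * u / 2))) :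
    ∫ u in 0..1, (1 - u) * F u ^ N ≤ √(π / (N * (π * r ^ 2))) / 2 := by
  have hderiv (x : ℝ) : HasDerivAt (fun x ↦ x - x ^ 2 / 2) (1 - x) x :=
    ((hasDerivAt_id' x).fun_sub ((hasDerivAt_pow 2 x).div_const 2)).congr_deriv (by norm_num)
  have hpow {u : ℝ} (hu : u ∈ Set.Icc 0 1) :
      F u ^ N ≤ exp (-(N * (π * r ^ 2)) * (u - u ^ 2 / 2) ^ 2) := by
    refine (pow_le_exp_neg_of_sq_le (y := π * r ^ 2 * (u - u ^ 2 / 2) ^ 2) (hF0 u) ?_ N).trans_eq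
      (by ring_nf)
    have hphase : (u - u ^ 2 / 2) ^ 2 ≤ u ^ 2 * (1 - (1 + r) * u / 2) := by
      have : 0 ≤ u * (1 / 2 - r + (1 - u) / 2) :=
        mul_nonneg hu.1 (by linarith [hu.2])
      nlinarith [mul_nonneg (sq_nonneg u) this]
    calc F u ^ 2 ≤ 1 - 2 * π * r ^ 2 * (u ^ 2 * (1 - (1 + r) * u / 2)) := hF u hu
      _ ≤ 1 - 2 * π * r ^ 2 * (u - u ^ 2 / 2) ^ 2 := by gcongr
      _ ≤ exp (-(2 * π * r ^ 2 * (u - u ^ 2 / 2) ^ 2)) := one_sub_le_exp_neg _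
      _ = _ := by ring_nf
  calc ∫ u in 0..1, (1 - u) * F u ^ N
      ≤ ∫ u in 0..1, (1 - u) * exp (-(N * (π * r ^ 2)) * (u - u ^ 2 / 2) ^ 2) := by
        refine intervalIntegral.integral_mono_on zero_le_one
          (Continuous.intervalIntegrable (by fun_prop) ..)
          (Continuous.intervalIntegrable (by fun_prop) ..) fun u hu ↦ ?_
        exact mul_le_mul_of_nonneg_left (hpow hu) (sub_nonneg.2 hu.2)
    _ ≤ _ := integral_deriv_mul_exp_neg_sq_le hderiv (by fun_prop) (by norm_num) (by norm_num)
        (by positivity)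

theorem integral_one_sub_mul_pow_le (hFc : Continuous F) (hF0 : ∀ u, 0 ≤ F u)
    (hr0 : 0 < r) (hr1 : r ≤ 1) (hN : 0 < N)
    (hF : ∀ u ∈ Set.Icc 0 1, F u ^ 2 ≤ 1 - 2 * π * r ^ 2 * (u ^ 2 * (1 - (1 + r) * u / 2))) :
    ∫ u in 0..1, (1 - u) * F u ^ N ≤ 1 / (2 * r * √N) := by
  have hsqrt : √(π / (N * (π * r ^ 2))) / 2 = 1 / (2 * r * √N) := by
    rw [show π / (N * (π * r ^ 2)) = (1 / r) ^ 2 / N by field_simp, sqrt_div (by positivity),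
      sqrt_sq (by positivity)]
    field_simp
  rw [← hsqrt]
  rcases le_total r (1 / 2) with hr | hr
  · exact integral_one_sub_mul_pow_le_of_le_half hFc hF0 hr0 hr hN hF
  · exact integral_one_sub_mul_pow_le_of_half_le hFc hF0 ⟨hr, hr1⟩ hN hF

end Power

/-! ### The Fejér kernel -/

/-- The Fejér kernel of the real line, whose Fourier transform is the tent `max 0 (1 - |t|)`. -/
noncomputable def fejerKernel (x : ℝ) : ℝ :=
  sinc (π * x) ^ 2

theorem fejerKernel_nonneg (x : ℝ) : 0 ≤ fejerKernel x :=
  sq_nonneg _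

theorem mul_sinc_pi_mul (x : ℝ) : x * sinc (π * x) = sin (π * x) / π := by
  rcases eq_or_ne x 0 with rfl | hx
  · simp
  · rw [sinc_of_ne_zero (mul_ne_zero pi_ne_zero hx)]
    field_simp

theorem sq_mul_fejerKernel (x : ℝ) : x ^ 2 * fejerKernel x = (sin (π * x) / π) ^ 2 := by
  rw [fejerKernel, ← mul_pow, mul_sinc_pi_mul]

theorem sq_mul_fejerKernel_add_int (x : ℝ) (n : ℤ) :
    (x + n) ^ 2 * fejerKernel (x + n) = x ^ 2 * fejerKernel x := by
  simp only [sq_mul_fejerKernel, div_pow]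
  rw [mul_add, mul_comm π n, sin_add_int_mul_pi, mul_pow, ← zpow_natCast, ← zpow_mul, mul_comm n,
    zpow_mul]
  norm_num

theorem integral_exp_two_pi_mul_I_eq_sinc (x : ℝ) :
    ∫ t in (-(1 / 2) : ℝ)..1 / 2, Complex.exp ((2 * π * x * t : ℝ) * Complex.I) =
      sinc (π * x) := by
  rcases eq_or_ne x 0 with rfl | hx
  · norm_num
  · have hc : 2 * π * x ≠ 0 := by positivity
    have h := intervalIntegral.integral_comp_mul_left (a := -(1 / 2)) (b := 1 / 2)
      (fun s : ℝ ↦ Complex.exp (s * Complex.I)) hc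
    rw [show 2 * π * x * (1 / 2) = π * x by ring,
      show 2 * π * x * -(1 / 2) = -(π * x) by ring, integral_exp_mul_I_eq_sinc] at h
    rw [h, Complex.real_smul]
    push_cast
    have : (x : ℂ) ≠ 0 := by exact_mod_cast hx
    field_simp

theorem fourierCoeffOn_exp_eq_sinc (x : ℝ) (n : ℤ) :
    fourierCoeffOn (by norm_num : (-(1 / 2) : ℝ) < 1 / 2)
      (fun t : ℝ ↦ Complex.exp ((2 * π * x * t : ℝ) * Complex.I)) n = sinc (π * (x - n)) := by
  rw [fourierCoeffOn_eq_integral, ← integral_exp_two_pi_mul_I_eq_sinc]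
  norm_num only [one_smul]
  refine intervalIntegral.integral_congr fun t _ ↦ ?_
  simp only [fourier_coe_apply, smul_eq_mul, ← Complex.exp_add]
  congr 1
  push_cast
  ring

theorem hasSum_fejerKernel_sub_int (x : ℝ) : HasSum (fun n : ℤ ↦ fejerKernel (x - n)) 1 := by
  set f : ℝ → ℂ := fun t ↦ Complex.exp ((2 * π * x * t : ℝ) * Complex.I) with hf
  have hnorm (t : ℝ) : ‖f t‖ = 1 := Complex.norm_exp_ofReal_mul_I _
  have hL2 : MemLp f 2 (volume.restrict (Set.Ioc (-(1 / 2)) (1 / 2))) :=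
    MemLp.of_bound (by fun_prop) 1 (.of_forall fun t ↦ (hnorm t).le)
  have h := hasSum_sq_fourierCoeffOn (by norm_num) hL2
  simp only [hnorm] at h
  simp only [hf, fourierCoeffOn_exp_eq_sinc, Complex.norm_real, norm_eq_abs, sq_abs] at h
  norm_num at h
  exact h

theorem fejerKernel_add_one_le {x : ℝ} (hx : 0 ≤ x) :
    fejerKernel (x + 1) ≤ x * fejerKernel x - (x + 1) * fejerKernel (x + 1) := by
  have hper := sq_mul_fejerKernel_add_int x 1
  push_cast at hper
  have hdecay : (x + 1) * fejerKernel (x + 1) ≤ x * fejerKernel x := by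
    rcases hx.eq_or_lt with rfl | hx
    · nlinarith
    · refine le_of_mul_le_mul_left ?_ hx
      nlinarith [fejerKernel_nonneg (x + 1)]
  refine le_of_mul_le_mul_left ?_ (by positivity : 0 < x + 1)
  linarith

theorem sum_fejerKernel_add_le {x : ℝ} (hx : 0 ≤ x) (M : ℕ) :
    ∑ n ∈ Finset.range M, fejerKernel (x + (n + 1)) ≤ x * fejerKernel x := by
  calc ∑ n ∈ Finset.range M, fejerKernel (x + (n + 1))
      ≤ ∑ n ∈ Finset.range M, ((x + n) * fejerKernel (x + n) -
          (x + (n + 1 : ℕ)) * fejerKernel (x + (n + 1 : ℕ))) := by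
        gcongr with n
        simpa [add_assoc] using fejerKernel_add_one_le (x := x + n) (by positivity)
    _ = x * fejerKernel x - (x + M) * fejerKernel (x + M) := by
        rw [Finset.sum_range_sub' fun n : ℕ ↦ (x + n) * fejerKernel (x + n)]
        simp
    _ ≤ x * fejerKernel x :=
        sub_le_self _ (mul_nonneg (by positivity) (fejerKernel_nonneg _))

theorem tendsto_sum_fejerKernel (x : ℝ) :
    Filter.Tendsto (fun M : ℕ ↦ ∑ n ∈ Finset.range M,
      (fejerKernel (x - n) + fejerKernel (x + (n + 1)))) Filter.atTop (nhds 1) := by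
  have h := (hasSum_fejerKernel_sub_int x).nat_add_neg_add_one.tendsto_sum_nat
  simpa only [Int.cast_natCast, Int.cast_neg, Int.cast_add, Int.cast_one, sub_neg_eq_add] using h

theorem integral_one_sub_mul_cos (x : ℝ) :
    ∫ t in (0 : ℝ)..1, (1 - t) * cos (2 * π * x * t) = fejerKernel x / 2 := by
  rcases eq_or_ne x 0 with rfl | hx
  · simp only [mul_zero, zero_mul, cos_zero, mul_one, fejerKernel, sinc_zero, one_pow]
    rw [intervalIntegral.integral_sub (by simp) (by simp)]
    norm_num
  have hderiv (t : ℝ) : HasDerivAt (fun t ↦ (1 - t) * sin (2 * π * x * t) / (2 * π * x)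
      - cos (2 * π * x * t) / (2 * π * x) ^ 2) ((1 - t) * cos (2 * π * x * t)) t := by
    have h : HasDerivAt (fun t ↦ 2 * π * x * t) (2 * π * x) t := by
      simpa using (hasDerivAt_id' t).const_mul (2 * π * x)
    refine (((((hasDerivAt_id' t).const_sub 1).fun_mul h.sin).div_const (2 * π * x)).fun_sub
      (h.cos.div_const ((2 * π * x) ^ 2))).congr_deriv ?_
    field_simp
    ring
  rw [intervalIntegral.integral_eq_sub_of_hasDerivAt (fun t _ ↦ hderiv t)
    (Continuous.intervalIntegrable (by fun_prop) _ _), fejerKernel,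
    sinc_of_ne_zero (mul_ne_zero pi_ne_zero hx)]
  have hcos : cos (2 * π * x) = 1 - 2 * sin (π * x) ^ 2 := by
    rw [mul_assoc, cos_two_mul, cos_sq']; ring
  simp only [mul_one, sub_self, zero_mul, zero_div, mul_zero, sin_zero, cos_zero, hcos]
  field_simp
  ring

theorem integral_sin_two_pi_mul (x : ℝ) :
    ∫ t in (0 : ℝ)..1, sin (2 * π * x * t) = π * (x * fejerKernel x) := by
  rcases eq_or_ne x 0 with rfl | hx
  · simp
  have hy : 2 * π * x ≠ 0 := by positivity
  have hcos : cos (2 * π * x) = 1 - 2 * sin (π * x) ^ 2 := by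
    rw [mul_assoc, cos_two_mul, cos_sq']; ring
  rw [intervalIntegral.integral_comp_mul_left sin hy, integral_sin, fejerKernel,
    sinc_of_ne_zero (mul_ne_zero pi_ne_zero hx), smul_eq_mul, mul_zero, mul_one, cos_zero, hcos]
  field_simp
  ring

/-! ### The Graham–Vaaler majorant of the truncated exponential -/

/-- The generating function `l / (exp l - 1)` of the Bernoulli numbers. With this coefficient the
numerator of `majorantFourier l` makes the majorant touch the truncated exponential at the
integers. -/
noncomputable def bernoulliGenFun (l : ℝ) : ℝ :=
  l / (exp l - 1)

section BernoulliGenFun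

variable {l : ℝ}

theorem bernoulliGenFun_mul_exp (hl : 0 < l) :
    bernoulliGenFun l * exp l = bernoulliGenFun l + l := by
  have : bernoulliGenFun l * (exp l - 1) = l :=
    div_mul_cancel₀ _ (sub_pos.2 (one_lt_exp_iff.2 hl)).ne'
  linarith

theorem bernoulliGenFun_nonneg (hl : 0 < l) : 0 ≤ bernoulliGenFun l :=
  div_nonneg hl.le (sub_pos.2 (one_lt_exp_iff.2 hl)).le

theorem bernoulliGenFun_le_one (hl : 0 < l) : bernoulliGenFun l ≤ 1 :=
  div_le_one_of_le₀ (by linarith [add_one_le_exp l]) (sub_pos.2 (one_lt_exp_iff.2 hl)).le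

theorem bernoulliGenFun_le_exp_neg_mul (hl : 0 < l) : bernoulliGenFun l ≤ exp (-l) * (1 + l) := by
  have h : bernoulliGenFun l = exp (-l) * (bernoulliGenFun l + l) := by
    rw [← bernoulliGenFun_mul_exp hl, mul_left_comm, ← exp_add, neg_add_cancel, exp_zero, mul_one]
  rw [h]
  gcongr
  exact bernoulliGenFun_le_one hl

theorem bernoulliGenFun_add_mul_one_sub_exp_neg (hl : 0 < l) :
    (bernoulliGenFun l + l) * (1 - exp (-l)) = l := by
  rw [mul_one_sub, ← bernoulliGenFun_mul_exp hl, mul_assoc, ← exp_add, add_neg_cancel, exp_zero,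
    bernoulliGenFun_mul_exp hl]
  ring

theorem one_le_bernoulliGenFun_add (hl : 0 < l) : 1 ≤ bernoulliGenFun l + l := by
  have h := mul_le_mul_of_nonneg_left (one_sub_le_exp_neg l)
    (add_nonneg (bernoulliGenFun_nonneg hl) hl.le)
  have h' := bernoulliGenFun_add_mul_one_sub_exp_neg hl
  nlinarith

theorem le_bernoulliGenFun_add_mul_one_sub_exp_neg (hl : 0 < l) {u : ℝ} (hu : u ∈ Set.Icc 0 l) :
    u ≤ (bernoulliGenFun l + l) * (1 - exp (-u)) := by
  have hconv : exp (-u) ≤ u / l * exp (-l) + (1 - u / l) := by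
    have h := convexOn_exp.2 (Set.mem_univ (-l)) (Set.mem_univ 0)
      (div_nonneg hu.1 hl.le) (sub_nonneg.2 ((div_le_one hl).2 hu.2)) (add_sub_cancel _ _)
    simpa [hl.ne'] using h
  calc u = u / l * ((bernoulliGenFun l + l) * (1 - exp (-l))) := by
        rw [bernoulliGenFun_add_mul_one_sub_exp_neg hl, div_mul_cancel₀ _ hl.ne']
    _ = (bernoulliGenFun l + l) * (1 - (u / l * exp (-l) + (1 - u / l))) := by ring
    _ ≤ _ := by
        gcongr
        exact add_nonneg (bernoulliGenFun_nonneg hl) hl.le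

theorem mul_geom_sum_exp_neg_le (hl : 0 < l) {u : ℝ} (hu : u ∈ Set.Icc 0 l) (M : ℕ) :
    u * ∑ n ∈ Finset.range M, exp (-u) ^ n ≤ bernoulliGenFun l + l := by
  have hb : 0 ≤ bernoulliGenFun l + l := add_nonneg (bernoulliGenFun_nonneg hl) hl.le
  calc u * ∑ n ∈ Finset.range M, exp (-u) ^ n
      ≤ (bernoulliGenFun l + l) * (1 - exp (-u)) * ∑ n ∈ Finset.range M, exp (-u) ^ n := by
        gcongr
        exact le_bernoulliGenFun_add_mul_one_sub_exp_neg hl hu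
    _ = (bernoulliGenFun l + l) * (1 - exp (-u) ^ M) := by
        rw [mul_assoc, mul_comm (1 - _), geom_sum_mul_neg]
    _ ≤ bernoulliGenFun l + l := mul_le_of_le_one_right hb (sub_le_self _ (by positivity))

end BernoulliGenFun

/-- The inhomogeneity of the functional equation `g x = exp (-l) * g (x - 1) + smoothingKernel l x`
of the majorant `g` of the truncated exponential. -/
noncomputable def smoothingKernel (l x : ℝ) : ℝ :=
  fejerKernel x + bernoulliGenFun l * (x * fejerKernel x - (x - 1) * fejerKernel (x - 1))

section SmoothingKernel

variable {l : ℝ}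

theorem smoothingKernel_nonneg (hl : 0 < l) {x : ℝ} (hx : x < 0) : 0 ≤ smoothingKernel l x := by
  have hper := sq_mul_fejerKernel_add_int x (-1)
  push_cast [← sub_eq_add_neg] at hper
  have hnonneg := fejerKernel_nonneg x
  have hone : 0 ≤ fejerKernel x + (x * fejerKernel x - (x - 1) * fejerKernel (x - 1)) := by
    refine nonneg_of_mul_nonneg_right ?_ (by linarith : 0 < 1 - x)
    nlinarith
  have := bernoulliGenFun_nonneg hl
  rw [smoothingKernel]
  nlinarith [bernoulliGenFun_le_one hl]

theorem exp_mul_smoothingKernel (hl : 0 < l) (x : ℝ) :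
    exp (l * x) * smoothingKernel l x = exp (l * x) * (1 - l * x) * fejerKernel x +
      (bernoulliGenFun l + l) * (exp (l * x) * (x * fejerKernel x) -
        exp (l * (x - 1)) * ((x - 1) * fejerKernel (x - 1))) := by
  have h : exp (l * x) * bernoulliGenFun l = (bernoulliGenFun l + l) * exp (l * (x - 1)) := by
    rw [← bernoulliGenFun_mul_exp hl, mul_assoc, ← exp_add]
    ring_nf
  rw [smoothingKernel]
  linear_combination (-(x - 1) * fejerKernel (x - 1)) * h

theorem sum_exp_mul_smoothingKernel (hl : 0 < l) (x : ℝ) (M : ℕ) :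
    ∑ n ∈ Finset.range M, exp (l * (x - n)) * smoothingKernel l (x - n) =
      ∑ n ∈ Finset.range M, exp (l * (x - n)) * (1 - l * (x - n)) * fejerKernel (x - n) +
        (bernoulliGenFun l + l) * (exp (l * x) * (x * fejerKernel x) -
          exp (l * (x - M)) * ((x - M) * fejerKernel (x - M))) := by
  have htel := Finset.sum_range_sub' (fun n : ℕ ↦
    exp (l * (x - n)) * ((x - n) * fejerKernel (x - n))) M
  simp only [Nat.cast_zero, sub_zero, Nat.cast_succ, ← sub_sub] at htel
  simp only [exp_mul_smoothingKernel hl, Finset.sum_add_distrib, ← Finset.mul_sum, htel]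

theorem hasDerivAt_sum_exp_mul_fejerKernel (b x : ℝ) (M : ℕ) (u : ℝ) :
    HasDerivAt (fun u ↦ ∑ n ∈ Finset.range M,
        exp (u * (x - n)) * (1 - u * (x - n)) * fejerKernel (x - n) +
          b * (exp (u * x) * (x * fejerKernel x)))
      (x ^ 2 * fejerKernel x * exp (u * x) * (b - u * ∑ n ∈ Finset.range M, exp (-u) ^ n)) u := by
  have hterm (n : ℕ) : HasDerivAt
      (fun u ↦ exp (u * (x - n)) * (1 - u * (x - n)) * fejerKernel (x - n))
      (-(x ^ 2 * fejerKernel x * exp (u * x) * (u * exp (-u) ^ n))) u := by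
    have h : HasDerivAt (fun u ↦ u * (x - n)) (x - n) u := by
      simpa using (hasDerivAt_id' u).mul_const (x - n)
    refine ((h.exp.fun_mul (h.const_sub 1)).mul_const _).congr_deriv ?_
    have hper := sq_mul_fejerKernel_add_int x (-n)
    push_cast [← sub_eq_add_neg] at hper
    have hexp : exp (u * (x - n)) = exp (u * x) * exp (-u) ^ n := by
      rw [← exp_nat_mul, ← exp_add]
      ring_nf
    rw [hexp]
    linear_combination (-(exp (u * x) * exp (-u) ^ n * u)) * hper
  have h : HasDerivAt (fun u ↦ u * x) x u := by simpa using (hasDerivAt_id' u).mul_const x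
  refine ((HasDerivAt.fun_sum fun n _ ↦ hterm n).fun_add
    ((h.exp.mul_const (x * fejerKernel x)).const_mul b)).congr_deriv ?_
  rw [Finset.sum_neg_distrib, ← Finset.mul_sum, ← Finset.mul_sum]
  ring

-- With the coefficient `bernoulliGenFun l + l` held fixed, the right-hand side is increasing in the
-- remaining occurrences of `l`.
theorem sum_fejerKernel_le_sum_exp_mul_fejerKernel (hl : 0 < l) {x : ℝ} (hx : 0 ≤ x) (M : ℕ) :
    ∑ n ∈ Finset.range M, fejerKernel (x - n) + x * fejerKernel x ≤
      ∑ n ∈ Finset.range M, exp (l * (x - n)) * (1 - l * (x - n)) * fejerKernel (x - n) +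
        (bernoulliGenFun l + l) * (exp (l * x) * (x * fejerKernel x)) := by
  have hderiv := hasDerivAt_sum_exp_mul_fejerKernel (bernoulliGenFun l + l) x M
  have hmono := monotoneOn_of_hasDerivWithinAt_nonneg (convex_Icc 0 l)
    (fun u _ ↦ (hderiv u).continuousAt.continuousWithinAt)
    (fun u _ ↦ (hderiv u).hasDerivWithinAt) fun u hu ↦
      mul_nonneg (mul_nonneg (mul_nonneg (sq_nonneg x) (fejerKernel_nonneg x)) (exp_pos _).le)
        (sub_nonneg.2 (mul_geom_sum_exp_neg_le hl (interior_subset hu) M))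
  have h := hmono (Set.left_mem_Icc.2 hl.le) (Set.right_mem_Icc.2 hl.le) hl.le
  simp only [zero_mul, exp_zero, sub_zero, mul_one, one_mul] at h
  exact (add_le_add le_rfl (le_mul_of_one_le_left (mul_nonneg hx (fejerKernel_nonneg x))
    (one_le_bernoulliGenFun_add hl))).trans h

theorem sum_fejerKernel_le_sum_exp_mul_smoothingKernel (hl : 0 < l) {x : ℝ} (hx : 0 ≤ x) {M : ℕ}
    (hM : x ≤ M) :
    ∑ n ∈ Finset.range M, (fejerKernel (x - n) + fejerKernel (x + (n + 1))) ≤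
      ∑ n ∈ Finset.range M, exp (l * (x - n)) * smoothingKernel l (x - n) := by
  have htail : exp (l * (x - M)) * ((x - M) * fejerKernel (x - M)) ≤ 0 :=
    mul_nonpos_of_nonneg_of_nonpos (exp_pos _).le
      (mul_nonpos_of_nonpos_of_nonneg (sub_nonpos.2 hM) (fejerKernel_nonneg _))
  rw [sum_exp_mul_smoothingKernel hl, Finset.sum_add_distrib, mul_sub]
  have h := sum_fejerKernel_le_sum_exp_mul_fejerKernel hl hx M
  have h' := sum_fejerKernel_add_le hx M
  have := mul_nonpos_of_nonneg_of_nonpos (zero_le_one.trans (one_le_bernoulliGenFun_add hl)) htail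
  linarith

end SmoothingKernel

section FunctionalEquation

variable {l : ℝ} {g : ℝ → ℝ}

theorem eq_sum_smoothingKernel_add (hg : ∀ x, g x = exp (-l) * g (x - 1) + smoothingKernel l x)
    (x : ℝ) (M : ℕ) :
    g x = ∑ n ∈ Finset.range M, exp (-l) ^ n * smoothingKernel l (x - n) +
      exp (-l) ^ M * g (x - M) := by
  induction M with
  | zero => simp
  | succ M ih =>
    rw [ih, Finset.sum_range_succ, hg (x - M), Nat.cast_succ, ← sub_sub]
    ring

theorem nonneg_of_smoothingKernel (hl : 0 < l)
    (hg : ∀ x, g x = exp (-l) * g (x - 1) + smoothingKernel l x)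
    {C : ℝ} (hC : ∀ x, |g x| ≤ C) {x : ℝ} (hx : x < 0) : 0 ≤ g x := by
  have hle (M : ℕ) : exp (-l) ^ M * -C ≤ g x := by
    rw [eq_sum_smoothingKernel_add hg x M]
    refine le_add_of_nonneg_of_le (Finset.sum_nonneg fun n _ ↦ ?_) ?_
    · exact mul_nonneg (by positivity)
        (smoothingKernel_nonneg hl (by linarith [n.cast_nonneg (α := ℝ)]))
    · gcongr
      exact (abs_le.1 (hC _)).1
  have hlim := (tendsto_pow_atTop_nhds_zero_of_lt_one (exp_pos _).le
    (exp_lt_one_iff.2 (neg_lt_zero.2 hl))).mul_const (-C)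
  simpa only [zero_mul] using le_of_tendsto' hlim hle

theorem exp_neg_le_of_smoothingKernel (hl : 0 < l)
    (hg : ∀ x, g x = exp (-l) * g (x - 1) + smoothingKernel l x)
    {C : ℝ} (hC : ∀ x, |g x| ≤ C) {x : ℝ} (hx : 0 ≤ x) : exp (-(l * x)) ≤ g x := by
  have hlim := (tendsto_sum_fejerKernel x).const_mul (exp (-(l * x)))
  rw [mul_one] at hlim
  refine le_of_tendsto hlim ?_
  filter_upwards [(tendsto_natCast_atTop_atTop (R := ℝ)).eventually_gt_atTop x] with M hM
  calc exp (-(l * x)) * ∑ n ∈ Finset.range M, (fejerKernel (x - n) + fejerKernel (x + (n + 1)))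
      ≤ exp (-(l * x)) * ∑ n ∈ Finset.range M, exp (l * (x - n)) * smoothingKernel l (x - n) := by
        exact mul_le_mul_of_nonneg_left
          (sum_fejerKernel_le_sum_exp_mul_smoothingKernel hl hx hM.le) (exp_pos _).le
    _ = ∑ n ∈ Finset.range M, exp (-l) ^ n * smoothingKernel l (x - n) := by
        rw [Finset.mul_sum]
        refine Finset.sum_congr rfl fun n _ ↦ ?_
        rw [← mul_assoc, ← exp_add, ← exp_nat_mul]
        ring_nf
    _ ≤ g x := by
        rw [eq_sum_smoothingKernel_add hg x M]
        exact le_add_of_nonneg_right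
          (mul_nonneg (by positivity) (nonneg_of_smoothingKernel hl hg hC (sub_neg.2 hM)))

end FunctionalEquation

/-- The Fourier transform, on the half-line of nonnegative frequencies, of the Graham–Vaaler
majorant of the truncated exponential. It is the solution of the Fourier image of the functional
equation with inhomogeneity `smoothingKernel l`. -/
noncomputable def majorantFourier (l t : ℝ) : ℂ :=
  ((1 - t : ℝ) + (bernoulliGenFun l * (sin (π * t) / π) : ℝ) *
      Complex.exp ((-(π * t) : ℝ) * Complex.I)) /
    (1 - (exp (-l) : ℝ) * Complex.exp ((-(2 * π * t) : ℝ) * Complex.I))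

section MajorantFourier

variable {l : ℝ}

theorem majorantFourier_den_ne_zero (hl : 0 < l) (t : ℝ) :
    1 - (exp (-l) : ℝ) * Complex.exp ((-(2 * π * t) : ℝ) * Complex.I) ≠ 0 := by
  refine sub_ne_zero.2 fun h ↦ ?_
  have hnorm := congrArg norm h
  rw [norm_one, norm_mul, Complex.norm_exp_ofReal_mul_I, mul_one, Complex.norm_real,
    norm_of_nonneg (exp_pos _).le] at hnorm
  exact (exp_lt_one_iff.2 (neg_lt_zero.2 hl)).ne' hnorm

theorem continuous_majorantFourier (hl : 0 < l) : Continuous (majorantFourier l) :=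
  Continuous.div (by fun_prop) (by fun_prop) (majorantFourier_den_ne_zero hl)

theorem sq_add_exp_neg_mul_le (hl : 0 < l) :
    l ^ 2 + exp (-l) * (l ^ 3 + l ^ 4 / 3) ≤ ((1 + l) * (1 - exp (-l))) ^ 2 := by
  have htaylor : exp (-l) * (l ^ 2 / 2 + l ^ 3 / 6) ≤ 1 - exp (-l) * (1 + l) := by
    have h : 1 + l + l ^ 2 / 2 + l ^ 3 / 6 ≤ exp l := by
      simpa [Finset.sum_range_succ, Nat.factorial] using sum_le_exp_of_nonneg hl.le 4
    have h' := mul_le_mul_of_nonneg_left h (exp_pos (-l)).le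
    rw [← exp_add, neg_add_cancel, exp_zero] at h'
    linarith
  calc l ^ 2 + exp (-l) * (l ^ 3 + l ^ 4 / 3)
      = l ^ 2 + 2 * l * (exp (-l) * (l ^ 2 / 2 + l ^ 3 / 6)) := by ring
    _ ≤ l ^ 2 + 2 * l * (1 - exp (-l) * (1 + l)) := by gcongr
    _ ≤ (l + (1 - exp (-l) * (1 + l))) ^ 2 := by linarith [sq_nonneg (1 - exp (-l) * (1 + l))]
    _ = ((1 + l) * (1 - exp (-l))) ^ 2 := by ring

theorem sq_mul_bernoulliGenFun_le (hl : 0 < l) :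
    (l * bernoulliGenFun l) ^ 2 ≤ 2 * exp (-l) * (1 + l) ^ 2 := by
  have hexp : l ^ 2 * exp (-l) ≤ 2 := by
    have h := mul_le_mul_of_nonneg_right (quadratic_le_exp_of_nonneg hl.le) (exp_pos (-l)).le
    rw [← exp_add, add_neg_cancel, exp_zero] at h
    nlinarith [exp_pos (-l)]
  calc (l * bernoulliGenFun l) ^ 2
      ≤ (l * (exp (-l) * (1 + l))) ^ 2 := by
        gcongr
        · exact mul_nonneg hl.le (bernoulliGenFun_nonneg hl)
        · exact bernoulliGenFun_le_exp_neg_mul hl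
    _ = l ^ 2 * exp (-l) * (exp (-l) * (1 + l) ^ 2) := by ring
    _ ≤ 2 * (exp (-l) * (1 + l) ^ 2) := by gcongr
    _ = 2 * exp (-l) * (1 + l) ^ 2 := by ring

theorem sin_pi_mul_div_pi_mem_Icc {t : ℝ} (ht : t ∈ Set.Icc 0 1) :
    sin (π * t) / π ∈ Set.Icc 0 (1 - t) := by
  have hnonneg : 0 ≤ π * (1 - t) := mul_nonneg pi_pos.le (sub_nonneg.2 ht.2)
  rw [← sin_pi_sub, show π - π * t = π * (1 - t) by ring]
  refine ⟨div_nonneg (sin_nonneg_of_nonneg_of_le_pi hnonneg ?_) pi_pos.le, ?_⟩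
  · exact mul_le_of_le_one_right pi_pos.le (by linarith [ht.1])
  · rw [div_le_iff₀' pi_pos]
    exact sin_le hnonneg

theorem majorantFourier_cross_term_le_of_half_le (hl : 0 < l) {t : ℝ} (ht : t ∈ Set.Icc (1 / 2) 1) :
    l ^ 2 * (2 * (1 - t) * (bernoulliGenFun l * (sin (π * t) / π)) * cos (π * t) +
        (bernoulliGenFun l * (sin (π * t) / π)) ^ 2) ≤
      4 * exp (-l) * (1 + l) ^ 2 * (1 - t) ^ 2 * sin (π * t) ^ 2 := by
  obtain ⟨hq0, hq⟩ := sin_pi_mul_div_pi_mem_Icc (Set.Icc_subset_Icc_left (by norm_num) ht)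
  have hm := bernoulliGenFun_nonneg hl
  have hcos : cos (π * t) ≤ 0 :=
    cos_nonpos_of_pi_div_two_le_of_le (by nlinarith [pi_pos, ht.1]) (by nlinarith [pi_pos, ht.2])
  have hw0 : 0 ≤ bernoulliGenFun l * (sin (π * t) / π) := mul_nonneg hm hq0
  have hw : bernoulliGenFun l * (sin (π * t) / π) ≤ 1 - t :=
    (mul_le_of_le_one_left hq0 (bernoulliGenFun_le_one hl)).trans hq
  have hwp : 0 ≤ (1 - t) * (bernoulliGenFun l * (sin (π * t) / π)) :=
    mul_nonneg (hq0.trans hq) hw0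
  rcases le_total (cos (π * t)) (-1 / 2) with hc | hc
  · refine (mul_nonpos_of_nonneg_of_nonpos (sq_nonneg l) ?_).trans (by positivity)
    nlinarith
  · have hsin : 3 / 4 ≤ sin (π * t) ^ 2 := by
      nlinarith [sin_sq_add_cos_sq (π * t)]
    calc l ^ 2 * (2 * (1 - t) * (bernoulliGenFun l * (sin (π * t) / π)) * cos (π * t) +
          (bernoulliGenFun l * (sin (π * t) / π)) ^ 2)
        ≤ l ^ 2 * (bernoulliGenFun l * (sin (π * t) / π)) ^ 2 := by
          gcongr
          exact add_le_of_nonpos_left (by nlinarith)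
      _ = (l * bernoulliGenFun l) ^ 2 * (sin (π * t) / π) ^ 2 := by ring
      _ ≤ 2 * exp (-l) * (1 + l) ^ 2 * (1 - t) ^ 2 := by
          gcongr
          exact sq_mul_bernoulliGenFun_le hl
      _ ≤ 4 * exp (-l) * (1 + l) ^ 2 * (1 - t) ^ 2 * (3 / 4) := by
          have : 0 ≤ exp (-l) * (1 + l) ^ 2 * (1 - t) ^ 2 := by positivity
          linarith
      _ ≤ _ := by gcongr

theorem majorantFourier_cross_term_le_of_le_half (hl : 0 < l) {t : ℝ} (ht : t ∈ Set.Icc 0 (1 / 2)) :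
    l ^ 2 * (2 * (1 - t) * (bernoulliGenFun l * (sin (π * t) / π)) * cos (π * t) +
        (bernoulliGenFun l * (sin (π * t) / π)) ^ 2) ≤
      exp (-l) * (l ^ 3 + l ^ 4 / 3) * (1 - t) ^ 2 +
        4 * exp (-l) * (1 + l) ^ 2 * (1 - t) ^ 2 * sin (π * t) ^ 2 := by
  obtain ⟨hq0, -⟩ := sin_pi_mul_div_pi_mem_Icc (Set.Icc_subset_Icc_right (by norm_num) ht)
  have hp : 0 ≤ 1 - t := by linarith [ht.2]
  have hm := bernoulliGenFun_nonneg hl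
  have hsin : 0 ≤ sin (π * t) := by simpa [pi_ne_zero] using mul_nonneg hq0 pi_pos.le
  have hq : sin (π * t) / π ≤ 2 / 3 * ((1 - t) * sin (π * t)) := by
    have hpi : 1 ≤ 2 / 3 * (1 - t) * π := by nlinarith [pi_gt_three, ht.2]
    rw [div_le_iff₀ pi_pos]
    nlinarith
  calc l ^ 2 * (2 * (1 - t) * (bernoulliGenFun l * (sin (π * t) / π)) * cos (π * t) +
        (bernoulliGenFun l * (sin (π * t) / π)) ^ 2)
      ≤ l ^ 2 * (2 * (1 - t) * (bernoulliGenFun l * (sin (π * t) / π)) * 1 +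
          (bernoulliGenFun l * (sin (π * t) / π)) ^ 2) := by
        gcongr
        exact cos_le_one _
    _ = l ^ 2 * (2 * (1 - t) * (bernoulliGenFun l * (sin (π * t) / π))) +
          (l * bernoulliGenFun l) ^ 2 * (sin (π * t) / π) ^ 2 := by ring
    _ ≤ l ^ 2 * (2 * (1 - t) * (exp (-l) * (1 + l) * (2 / 3 * ((1 - t) * sin (π * t))))) +
          2 * exp (-l) * (1 + l) ^ 2 * (2 / 3 * ((1 - t) * sin (π * t))) ^ 2 := by
        gcongr
        · exact bernoulliGenFun_le_exp_neg_mul hl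
        · exact sq_mul_bernoulliGenFun_le hl
    _ = exp (-l) * (1 - t) ^ 2 * (1 / 3 * l ^ 4 + 20 / 9 * ((1 + l) * sin (π * t)) ^ 2 -
          1 / 3 * (l ^ 2 - 2 * ((1 + l) * sin (π * t))) ^ 2) := by ring
    _ ≤ exp (-l) * (1 - t) ^ 2 *
          (l ^ 3 + 1 / 3 * l ^ 4 + 4 * ((1 + l) * sin (π * t)) ^ 2) := by
        gcongr
        have : 0 ≤ l ^ 3 := by positivity
        linarith [sq_nonneg (l ^ 2 - 2 * ((1 + l) * sin (π * t))),
          sq_nonneg ((1 + l) * sin (π * t))]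
    _ = _ := by ring

theorem sq_norm_ofReal_add_ofReal_mul_exp_mul_I (a b θ : ℝ) :
    ‖(a : ℂ) + b * Complex.exp (θ * Complex.I)‖ ^ 2 = a ^ 2 + 2 * a * b * cos θ + b ^ 2 := by
  rw [← Complex.normSq_eq_norm_sq, Complex.normSq_apply]
  simp only [Complex.add_re, Complex.add_im, Complex.ofReal_re, Complex.ofReal_im,
    Complex.re_ofReal_mul, Complex.im_ofReal_mul, Complex.exp_ofReal_mul_I_re,
    Complex.exp_ofReal_mul_I_im]
  linear_combination b ^ 2 * sin_sq_add_cos_sq θ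

theorem norm_majorantFourier_le (hl : 0 < l) {t : ℝ} (ht : t ∈ Set.Icc 0 1) :
    ‖majorantFourier l t‖ ≤ (1 + 1 / l) * (1 - t) := by
  have hp : 0 ≤ 1 - t := sub_nonneg.2 ht.2
  have hcross : l ^ 2 * (2 * (1 - t) * (bernoulliGenFun l * (sin (π * t) / π)) * cos (π * t) +
      (bernoulliGenFun l * (sin (π * t) / π)) ^ 2) ≤
        exp (-l) * (l ^ 3 + l ^ 4 / 3) * (1 - t) ^ 2 +
          4 * exp (-l) * (1 + l) ^ 2 * (1 - t) ^ 2 * sin (π * t) ^ 2 := by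
    rcases le_total t (1 / 2) with h | h
    · exact majorantFourier_cross_term_le_of_le_half hl ⟨ht.1, h⟩
    · exact (majorantFourier_cross_term_le_of_half_le hl ⟨h, ht.2⟩).trans
        (le_add_of_nonneg_left (by positivity))
  have hdiag := mul_le_mul_of_nonneg_left (sq_add_exp_neg_mul_le hl) (sq_nonneg (1 - t))
  have hnum := sq_norm_ofReal_add_ofReal_mul_exp_mul_I (1 - t)
    (bernoulliGenFun l * (sin (π * t) / π)) (-(π * t))
  have hden := sq_norm_ofReal_add_ofReal_mul_exp_mul_I 1 (-exp (-l)) (-(2 * π * t))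
  rw [Complex.ofReal_one, Complex.ofReal_neg, neg_mul, ← sub_eq_add_neg] at hden
  rw [majorantFourier, norm_div, div_le_iff₀ (norm_pos_iff.2 (majorantFourier_den_ne_zero hl t))]
  refine le_of_sq_le_sq ?_ (by positivity)
  rw [mul_pow, hnum, hden, cos_neg, cos_neg, mul_assoc 2 π t, cos_two_mul,
    show (1 + 1 / l) * (1 - t) = (1 + l) * (1 - t) / l by field_simp; ring, div_pow,
    div_mul_eq_mul_div, le_div_iff₀ (by positivity), cos_sq']
  linarith

end MajorantFourier

/-- The Graham–Vaaler majorant of `exp (-(l * x))` truncated to `0 ≤ x`. It is band-limited, being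
the Fourier integral of a function supported in `[-1, 1]`. -/
noncomputable def truncExpMajorant (l x : ℝ) : ℝ :=
  2 * ∫ t in (0 : ℝ)..1, (majorantFourier l t * Complex.exp ((2 * π * x * t : ℝ) * Complex.I)).re

section TruncExpMajorant

variable {l : ℝ}

theorem intervalIntegrable_majorantFourier_mul_exp (hl : 0 < l) (x : ℝ) :
    IntervalIntegrable (fun t : ℝ ↦
      (majorantFourier l t * Complex.exp ((2 * π * x * t : ℝ) * Complex.I)).re) volume 0 1 := by
  have := continuous_majorantFourier hl
  exact Continuous.intervalIntegrable (by fun_prop) _ _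

theorem majorantFourier_mul_one_sub (hl : 0 < l) (t θ : ℝ) :
    majorantFourier l t * Complex.exp (θ * Complex.I) -
        (exp (-l) : ℝ) * (majorantFourier l t * Complex.exp ((θ - 2 * π * t : ℝ) * Complex.I)) =
      (1 - t : ℝ) * Complex.exp (θ * Complex.I) +
        (bernoulliGenFun l * (sin (π * t) / π) : ℝ) *
          Complex.exp ((θ - π * t : ℝ) * Complex.I) := by
  have hshift (s : ℝ) : Complex.exp ((θ - s : ℝ) * Complex.I) =
      Complex.exp ((-s : ℝ) * Complex.I) * Complex.exp (θ * Complex.I) := by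
    rw [← Complex.exp_add]
    push_cast
    ring_nf
  have hdiv : majorantFourier l t *
      (1 - (exp (-l) : ℝ) * Complex.exp ((-(2 * π * t) : ℝ) * Complex.I)) = _ :=
    div_mul_cancel₀ _ (majorantFourier_den_ne_zero hl t)
  rw [hshift, hshift]
  linear_combination Complex.exp (θ * Complex.I) * hdiv

theorem re_majorantFourier_mul_exp_sub (hl : 0 < l) (x t : ℝ) :
    (majorantFourier l t * Complex.exp ((2 * π * x * t : ℝ) * Complex.I)).re - exp (-l) *
        (majorantFourier l t * Complex.exp ((2 * π * (x - 1) * t : ℝ) * Complex.I)).re =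
      (1 - t) * cos (2 * π * x * t) + bernoulliGenFun l / (2 * π) *
        (sin (2 * π * x * t) - sin (2 * π * (x - 1) * t)) := by
  have h := congrArg Complex.re (majorantFourier_mul_one_sub hl t (2 * π * x * t))
  rw [Complex.sub_re, Complex.add_re, Complex.re_ofReal_mul, Complex.re_ofReal_mul,
    Complex.re_ofReal_mul, Complex.exp_ofReal_mul_I_re, Complex.exp_ofReal_mul_I_re] at h
  rw [show 2 * π * (x - 1) * t = 2 * π * x * t - 2 * π * t by ring, h, sin_sub_sin,
    show (2 * π * x * t - (2 * π * x * t - 2 * π * t)) / 2 = π * t by ring,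
    show (2 * π * x * t + (2 * π * x * t - 2 * π * t)) / 2 = 2 * π * x * t - π * t by ring]
  field_simp

theorem truncExpMajorant_eq (hl : 0 < l) (x : ℝ) :
    truncExpMajorant l x = exp (-l) * truncExpMajorant l (x - 1) + smoothingKernel l x := by
  have hint := intervalIntegrable_majorantFourier_mul_exp hl
  have hcos : IntervalIntegrable (fun t ↦ (1 - t) * cos (2 * π * x * t)) volume 0 1 :=
    Continuous.intervalIntegrable (by fun_prop) _ _
  have hsin (y : ℝ) : IntervalIntegrable (fun t ↦ sin (2 * π * y * t)) volume 0 1 :=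
    Continuous.intervalIntegrable (by fun_prop) _ _
  rw [← sub_eq_iff_eq_add']
  calc truncExpMajorant l x - exp (-l) * truncExpMajorant l (x - 1)
      = 2 * ∫ t in (0 : ℝ)..1, ((1 - t) * cos (2 * π * x * t) + bernoulliGenFun l / (2 * π) *
          (sin (2 * π * x * t) - sin (2 * π * (x - 1) * t))) := by
        rw [truncExpMajorant, truncExpMajorant, mul_left_comm, ← mul_sub,
          ← intervalIntegral.integral_const_mul,
          ← intervalIntegral.integral_sub (hint x) ((hint (x - 1)).const_mul _)]
        simp only [re_majorantFourier_mul_exp_sub hl]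
    _ = 2 * (fejerKernel x / 2 + bernoulliGenFun l / (2 * π) *
          (π * (x * fejerKernel x) - π * ((x - 1) * fejerKernel (x - 1)))) := by
        rw [intervalIntegral.integral_add hcos (((hsin x).sub (hsin _)).const_mul _),
          intervalIntegral.integral_const_mul, intervalIntegral.integral_sub (hsin x) (hsin _),
          integral_one_sub_mul_cos, integral_sin_two_pi_mul, integral_sin_two_pi_mul]
    _ = smoothingKernel l x := by
        rw [smoothingKernel]
        field_simp

theorem abs_re_majorantFourier_mul_exp_le (hl : 0 < l) {t : ℝ} (ht : t ∈ Set.Icc 0 1) (θ : ℝ) :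
    |(majorantFourier l t * Complex.exp (θ * Complex.I)).re| ≤ 1 + 1 / l :=
  calc |(majorantFourier l t * Complex.exp (θ * Complex.I)).re|
      ≤ ‖majorantFourier l t‖ := by
        simpa [Complex.norm_exp_ofReal_mul_I] using
          Complex.abs_re_le_norm (majorantFourier l t * Complex.exp (θ * Complex.I))
    _ ≤ (1 + 1 / l) * (1 - t) := norm_majorantFourier_le hl ht
    _ ≤ 1 + 1 / l := mul_le_of_le_one_right (by positivity) (by linarith [ht.1])

theorem abs_truncExpMajorant_le (hl : 0 < l) (x : ℝ) :
    |truncExpMajorant l x| ≤ 2 * (1 + 1 / l) := by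
  rw [truncExpMajorant, abs_mul, abs_two]
  gcongr
  have h : ‖∫ t in (0 : ℝ)..1, (majorantFourier l t *
      Complex.exp ((2 * π * x * t : ℝ) * Complex.I)).re‖ ≤ (1 + 1 / l) * |1 - 0| :=
    intervalIntegral.norm_integral_le_of_norm_le_const fun t ht ↦
      abs_re_majorantFourier_mul_exp_le hl
        (Set.Ioc_subset_Icc_self (by rwa [Set.uIoc_of_le zero_le_one] at ht)) _
  simpa using h

theorem truncExpMajorant_nonneg (hl : 0 < l) {x : ℝ} (hx : x < 0) : 0 ≤ truncExpMajorant l x :=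
  nonneg_of_smoothingKernel hl (truncExpMajorant_eq hl) (abs_truncExpMajorant_le hl) hx

theorem exp_neg_le_truncExpMajorant (hl : 0 < l) {x : ℝ} (hx : 0 ≤ x) :
    exp (-(l * x)) ≤ truncExpMajorant l x :=
  exp_neg_le_of_smoothingKernel hl (truncExpMajorant_eq hl) (abs_truncExpMajorant_le hl) hx

section Measure

variable (P : Measure ℝ) [IsFiniteMeasure P]

theorem integrable_prod_majorantFourier_mul_exp (hl : 0 < l) :
    Integrable (fun z : ℝ × ℝ ↦
      (majorantFourier l z.2 * Complex.exp ((2 * π * z.1 * z.2 : ℝ) * Complex.I)).re)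
      (P.prod (volume.restrict (Set.Ioc 0 1))) := by
  have hcont := continuous_majorantFourier hl
  have hmem : ∀ᵐ z ∂(P.prod (volume.restrict (Set.Ioc (0 : ℝ) 1))), z.2 ∈ Set.Ioc (0 : ℝ) 1 :=
    Measure.quasiMeasurePreserving_snd.ae (ae_restrict_mem measurableSet_Ioc)
  refine Integrable.of_bound (C := 1 + 1 / l) (Continuous.aestronglyMeasurable (by fun_prop)) ?_
  filter_upwards [hmem] with z hz
  exact abs_re_majorantFourier_mul_exp_le hl (Set.Ioc_subset_Icc_self hz) _

theorem integrable_truncExpMajorant (hl : 0 < l) : Integrable (truncExpMajorant l) P := by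
  have h := (integrable_prod_majorantFourier_mul_exp P hl).integral_prod_left.const_mul 2
  simp only [← intervalIntegral.integral_of_le zero_le_one] at h
  exact h

theorem integral_re_mul_exp_eq_re_mul_charFun (c : ℂ) (t : ℝ) :
    ∫ x, (c * Complex.exp ((2 * π * x * t : ℝ) * Complex.I)).re ∂P =
      (c * charFun P (2 * π * t)).re := by
  have hint : Integrable (fun x : ℝ ↦ c * Complex.exp ((2 * π * x * t : ℝ) * Complex.I)) P :=
    Integrable.of_bound (C := ‖c‖) (Continuous.aestronglyMeasurable (by fun_prop))
      (.of_forall fun _ ↦ by rw [norm_mul, Complex.norm_exp_ofReal_mul_I, mul_one])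
  refine (integral_re hint).trans ?_
  rw [integral_const_mul, charFun_apply_real, RCLike.re_to_complex]
  congr! 5
  push_cast
  ring

theorem integral_truncExpMajorant (hl : 0 < l) :
    ∫ x, truncExpMajorant l x ∂P =
      2 * ∫ t in (0 : ℝ)..1, (majorantFourier l t * charFun P (2 * π * t)).re := by
  simp only [truncExpMajorant, intervalIntegral.integral_of_le zero_le_one, integral_const_mul]
  rw [integral_integral_swap (integrable_prod_majorantFourier_mul_exp P hl)]
  simp only [integral_re_mul_exp_eq_re_mul_charFun]

theorem setIntegral_Ici_exp_neg_le (hl : 0 < l) :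
    ∫ x in Set.Ici 0, exp (-(l * x)) ∂P ≤
      2 * (1 + 1 / l) * ∫ t in (0 : ℝ)..1, (1 - t) * ‖charFun P (2 * π * t)‖ := by
  have hmajorant := continuous_majorantFourier hl
  calc ∫ x in Set.Ici 0, exp (-(l * x)) ∂P
      = ∫ x, (Set.Ici 0).indicator (fun x ↦ exp (-(l * x))) x ∂P :=
        (integral_indicator measurableSet_Ici).symm
    _ ≤ ∫ x, truncExpMajorant l x ∂P := by
        refine integral_mono_of_nonneg
          (.of_forall (Set.indicator_nonneg fun x _ ↦ (exp_pos _).le))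
          (integrable_truncExpMajorant P hl) (.of_forall fun x ↦ ?_)
        rcases le_or_gt 0 x with hx | hx
        · simpa [Set.indicator, hx] using exp_neg_le_truncExpMajorant hl hx
        · simpa [Set.indicator, hx.not_ge] using truncExpMajorant_nonneg hl hx
    _ = 2 * ∫ t in (0 : ℝ)..1, (majorantFourier l t * charFun P (2 * π * t)).re :=
        integral_truncExpMajorant P hl
    _ ≤ 2 * ∫ t in (0 : ℝ)..1, (1 + 1 / l) * ((1 - t) * ‖charFun P (2 * π * t)‖) := by
        gcongr
        refine intervalIntegral.integral_mono_on zero_le_one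
          (Continuous.intervalIntegrable (by fun_prop) _ _)
          (Continuous.intervalIntegrable (by fun_prop) _ _) fun t ht ↦ ?_
        refine (Complex.re_le_norm _).trans ?_
        rw [norm_mul, ← mul_assoc]
        gcongr
        exact norm_majorantFourier_le hl ht
    _ = _ := by rw [intervalIntegral.integral_const_mul, mul_assoc]

end Measure

end TruncExpMajorant

/-! ### Exponentially damped sums of independent variables -/

section SumIID

variable {P : Measure ℝ} [IsProbabilityMeasure P]

theorem norm_charFun_map_const_mul_sum_sub {ι : Type*} [Fintype ι] (c q t : ℝ) :
    ‖charFun ((Measure.pi fun _ : ι ↦ P).map fun z ↦ c * ∑ i, (z i - q)) t‖ =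
      ‖charFun P (c * t)‖ ^ Fintype.card ι := by
  have hsum : Measurable fun z : ι → ℝ ↦ ∑ i, z i := by fun_prop
  set d := -(c * (Fintype.card ι * q))
  have hshift : (fun z : ι → ℝ ↦ c * ∑ i, (z i - q)) = (· + d) ∘ fun z ↦ c * ∑ i, z i := by
    ext z
    simp only [d, Function.comp_apply, Finset.sum_sub_distrib, Finset.sum_const,
      Finset.card_univ, nsmul_eq_mul]
    ring
  rw [hshift, ← Measure.map_map (by fun_prop) (by fun_prop), charFun_map_add_const, norm_mul,
    charFun_map_mul_comp hsum.aemeasurable, charFun_map_sum_pi_eq_prod, Finset.prod_const,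
    Pi.pow_apply, norm_pow, Finset.card_univ]
  simp [Complex.norm_exp]

theorem sq_norm_charFun_rescaled_le (h3 : MemLp id 3 P) (hvar : 0 < Var[id; P]) {r u : ℝ}
    (hr : 0 < r) (hρ : r * ∫ x, |x - P[id]| ^ 3 ∂P = √Var[id; P] ^ 3) (hu : 0 ≤ u) :
    ‖charFun P (√(2 * π) * r / √Var[id; P] * u)‖ ^ 2 ≤
      1 - 2 * π * r ^ 2 * (u ^ 2 * (1 - (1 + r) * u / 2)) := by
  refine (sq_norm_charFun_le h3 _).trans_eq ?_
  set σ := √Var[id; P]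
  have hσ : 0 < σ := sqrt_pos.2 hvar
  have hσ_sq : Var[id; P] = σ ^ 2 := (sq_sqrt hvar.le).symm
  have hρ' : ∫ x, |x - P[id]| ^ 3 ∂P = σ ^ 3 / r := by rw [← hρ]; field_simp
  have h2π : 2 * π = √(2 * π) ^ 2 := (sq_sqrt (by positivity)).symm
  rw [abs_of_nonneg (by positivity), hρ', hσ_sq, h2π, sqrt_sq (by positivity)]
  field_simp
  ring

theorem setIntegral_exp_neg_mul_sum_sub_le {N : ℕ} (hN : 0 < N) {η c r q : ℝ} (hη : 0 < η)
    (hc : 0 < c) (hr0 : 0 < r) (hr1 : r ≤ 1)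
    (hchar : ∀ u ∈ Set.Icc 0 1,
      ‖charFun P (c * u)‖ ^ 2 ≤ 1 - 2 * π * r ^ 2 * (u ^ 2 * (1 - (1 + r) * u / 2))) :
    ∫ z in {z : Fin N → ℝ | 0 ≤ ∑ i, (z i - q)}, exp (-(η * ∑ i, (z i - q)))
        ∂(Measure.pi fun _ ↦ P) ≤ 1 / √N * (1 / r + c / (2 * π * η * r)) := by
  set s := c / (2 * π)
  set l := η / s
  set μ := Measure.pi fun _ : Fin N ↦ P
  have hs : 0 < s := by positivity
  have hmeas : Measurable fun z : Fin N → ℝ ↦ s * ∑ i, (z i - q) := by fun_prop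
  have hset : {z : Fin N → ℝ | 0 ≤ ∑ i, (z i - q)} =
      (fun z ↦ s * ∑ i, (z i - q)) ⁻¹' Set.Ici 0 :=
    Set.ext fun z ↦ (mul_nonneg_iff_of_pos_left hs).symm
  have hexp (y : ℝ) : η * y = l * (s * y) := by rw [← mul_assoc, div_mul_cancel₀ η hs.ne']
  have hscale (u : ℝ) : s * (2 * π * u) = c * u := by simp only [s]; field_simp
  calc ∫ z in {z : Fin N → ℝ | 0 ≤ ∑ i, (z i - q)}, exp (-(η * ∑ i, (z i - q))) ∂μ
      = ∫ x in Set.Ici 0, exp (-(l * x)) ∂(μ.map fun z ↦ s * ∑ i, (z i - q)) := by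
        rw [setIntegral_map measurableSet_Ici
          (Continuous.aestronglyMeasurable (by fun_prop)) hmeas.aemeasurable, hset]
        simp only [hexp]
    _ ≤ 2 * (1 + 1 / l) * ∫ u in (0 : ℝ)..1, (1 - u) * ‖charFun P (c * u)‖ ^ N := by
        have : IsProbabilityMeasure μ := by infer_instance
        refine (setIntegral_Ici_exp_neg_le _ (by positivity)).trans_eq ?_
        simp only [μ, norm_charFun_map_const_mul_sum_sub, hscale, Fintype.card_fin]
    _ ≤ 2 * (1 + 1 / l) * (1 / (2 * r * √N)) := by
        gcongr
        exact integral_one_sub_mul_pow_le (by fun_prop) (fun u ↦ norm_nonneg _) hr0 hr1 hN hchar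
    _ = 1 / √N * (1 / r + c / (2 * π * η * r)) := by
        simp only [l, s]
        field_simp

theorem setIntegral_exp_neg_mul_sum_sub_mean_le (h3 : MemLp id 3 P) (hvar : 0 < Var[id; P])
    {N : ℕ} (hN : 0 < N) {η : ℝ} (hη : 0 < η) :
    ∫ z in {z : Fin N → ℝ | 0 ≤ ∑ i, (z i - P[id])}, exp (-(η * ∑ i, (z i - P[id])))
        ∂(Measure.pi fun _ ↦ P) ≤
      1 / √N * ((∫ x, |x - P[id]| ^ 3 ∂P) / Var[id; P] ^ ((3 : ℝ) / 2) +
        1 / (η * √(2 * π * Var[id; P]))) := by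
  set ρ := ∫ x, |x - P[id]| ^ 3 ∂P
  set σ := √Var[id; P] with hσ_def
  have hσ : 0 < σ := sqrt_pos.2 hvar
  have hσρ : σ ^ 3 ≤ ρ := by
    have := sqrt_integral_sq_pow_three_le (h3.sub (memLp_const P[id]))
    rwa [hσ_def, variance_eq_integral (by fun_prop)]
  have hρ : 0 < ρ := (pow_pos hσ 3).trans_le hσρ
  set r := σ ^ 3 / ρ
  have hr : 0 < r := by positivity
  refine (setIntegral_exp_neg_mul_sum_sub_le hN hη (c := √(2 * π) * r / σ) (by positivity) hr
    ((div_le_one hρ).2 hσρ) fun u hu ↦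
      sq_norm_charFun_rescaled_le h3 hvar hr (div_mul_cancel₀ _ hρ.ne') hu.1).trans_eq ?_
  have hrpow : Var[id; P] ^ ((3 : ℝ) / 2) = σ ^ 3 := by
    rw [rpow_div_two_eq_sqrt _ hvar.le, rpow_ofNat]
  have h2π : √(2 * π) ^ 2 = 2 * π := sq_sqrt (by positivity)
  rw [hrpow, sqrt_mul (x := 2 * π) (by positivity), ← hσ_def, ← h2π, sqrt_sq (by positivity)]
  simp only [r]
  field_simp

end SumIID

/-! ### Exponential tilting and the Legendre transform -/

section Tilted

theorem pi_tilted {ι : Type*} [Fintype ι] {α : ι → Type*} [∀ i, MeasurableSpace (α i)]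
    (μ : ∀ i, Measure (α i)) [∀ i, SigmaFinite (μ i)] (f : ∀ i, α i → ℝ) :
    Measure.pi (fun i ↦ (μ i).tilted (f i)) =
      (Measure.pi μ).tilted fun z ↦ ∑ i, f i (z i) := by
  refine Measure.pi_eq fun s _ ↦ ?_
  simp only [tilted_apply_eq_ofReal_integral]
  rw [← ENNReal.ofReal_prod_of_nonneg fun i _ ↦ integral_nonneg fun x ↦ by positivity,
    ← integral_fintype_prod_eq_prod fun i x ↦ exp (f i x) / ∫ x, exp (f i x) ∂(μ i),
    ← Measure.restrict_pi_pi]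
  simp only [exp_sum, integral_fintype_prod_eq_prod fun i x ↦ exp (f i x), Finset.prod_div_distrib]

theorem measureReal_eq_integral_exp_mul_setIntegral_tilted {α : Type*} [MeasurableSpace α]
    {μ : Measure α} [SFinite μ] {f : α → ℝ} (hf : Integrable (fun x ↦ exp (f x)) μ) (A : Set α) :
    μ.real A = (∫ x, exp (f x) ∂μ) * ∫ x in A, exp (-f x) ∂(μ.tilted f) := by
  rcases eq_zero_or_neZero μ with rfl | _
  · simp
  · simp only [setIntegral_tilted, smul_eq_mul, div_mul_eq_mul_div, ← exp_add, add_neg_cancel,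
      exp_zero, setIntegral_const]
    rw [mul_one_div, mul_div_cancel₀ _ (integral_exp_pos hf).ne']

theorem measureReal_pi_eq_mgf_pow_mul {ν : Measure ℝ} [SigmaFinite ν] {ι : Type*} [Fintype ι]
    {η : ℝ} (hη : η ∈ integrableExpSet id ν) (A : Set (ι → ℝ)) :
    (Measure.pi fun _ : ι ↦ ν).real A = mgf id ν η ^ Fintype.card ι *
      ∫ z in A, exp (-(η * ∑ i, z i)) ∂(Measure.pi fun _ : ι ↦ ν.tilted (η * id ·)) := by
  have hexp (z : ι → ℝ) : exp (η * ∑ i, z i) = ∏ i, exp (η * z i) := by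
    rw [Finset.mul_sum, exp_sum]
  have hint : Integrable (fun z : ι → ℝ ↦ exp (η * ∑ i, z i)) (Measure.pi fun _ ↦ ν) := by
    simp only [hexp]
    exact Integrable.fintype_prod fun _ ↦ hη
  rw [measureReal_eq_integral_exp_mul_setIntegral_tilted hint, pi_tilted]
  simp only [hexp, id_eq, ← Finset.mul_sum]
  rw [integral_fintype_prod_eq_pow fun x ↦ exp (η * x)]
  rfl

variable {Ω : Type*} [MeasurableSpace Ω] {μ : Measure Ω} {X : Ω → ℝ} {η : ℝ}

theorem variance_tilted_mul_pos [IsProbabilityMeasure μ]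
    (hη : η ∈ interior (integrableExpSet X μ)) (hX : 0 < Var[X; μ]) :
    0 < Var[X; μ.tilted (η * X ·)] := by
  have hint : η ∈ integrableExpSet X μ := interior_subset hη
  have := isProbabilityMeasure_tilted hint
  refine (variance_nonneg _ _).lt_of_ne' fun h ↦ hX.ne' ?_
  have hconst := (absolutelyContinuous_tilted hint).ae_le
    (ae_eq_integral_of_variance_eq_zero (memLp_tilted_mul hη 2) h)
  rw [variance_congr hconst]
  simp [variance_eq_integral]

end Tilted

section LegendreTransform

variable {Ω : Type*} [MeasurableSpace Ω] {μ : Measure Ω} {X : Ω → ℝ} {η t q : ℝ}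

theorem deriv_cgf_mul_sub_add_cgf_le [NeZero μ] (hη : η ∈ interior (integrableExpSet X μ))
    (ht : t ∈ integrableExpSet X μ) :
    (t - η) * deriv (cgf X μ) η + cgf X μ η ≤ cgf X μ t := by
  have hη' : η ∈ integrableExpSet X μ := interior_subset hη
  have := isProbabilityMeasure_tilted hη'
  have hadd (ω : Ω) : η * X ω + (t - η) * X ω = t * X ω := by ring
  have hjensen : exp ((t - η) * deriv (cgf X μ) η) ≤ mgf X μ t / mgf X μ η := by
    rw [← integral_tilted_mul_self hη, ← integral_const_mul]
    refine (convexOn_exp.map_integral_le (by fun_prop) isClosed_univ (by simp)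
      (((memLp_tilted_mul hη 1).integrable (by simp)).const_mul _) ?_).trans_eq ?_
    · refine (integrable_tilted_iff hη' _).2 ?_
      simp only [smul_eq_mul, Function.comp_apply, ← exp_add, hadd]
      exact ht
    · rw [integral_exp_tilted]
      simp only [Pi.add_apply, hadd, mgf]
  rw [← exp_cgf hη', ← exp_cgf ht, ← exp_sub, exp_le_exp] at hjensen
  linarith

-- `cgf X μ` takes the junk value `0` where the moment generating function is infinite.
theorem not_bddAbove_range_mul_sub_cgf [IsFiniteMeasure μ] (ht : t ∉ integrableExpSet X μ)
    (htq : 0 < t * q) : ¬ BddAbove (Set.range fun s ↦ s * q - cgf X μ s) := by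
  rintro ⟨B, hB⟩
  have hcgf {s : ℝ} (hs : 1 ≤ s) : cgf X μ (s * t) = 0 := by
    refine cgf_undef fun hint ↦ ht ?_
    have := (convex_integrableExpSet (X := X) (μ := μ)).starConvex (x := 0)
      (by simp [integrableExpSet])
      |>.smul_mem (x := s * t) hint (t := s⁻¹) (by positivity) (inv_le_one_of_one_le₀ hs)
    rwa [smul_eq_mul, inv_mul_cancel_left₀ (by positivity)] at this
  have hB' := hB ⟨(1 + |B| / (t * q)) * t, rfl⟩
  simp only [hcgf (le_add_of_nonneg_right (by positivity : 0 ≤ |B| / (t * q))), sub_zero] at hB'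
  rw [mul_assoc, add_mul, div_mul_cancel₀ _ htq.ne'] at hB'
  linarith [le_abs_self B]

theorem sSup_range_mul_deriv_cgf_sub_cgf_le [IsProbabilityMeasure μ]
    (hη : η ∈ interior (integrableExpSet X μ)) :
    sSup (Set.range fun t ↦ t * deriv (cgf X μ) η - cgf X μ t) ≤
      η * deriv (cgf X μ) η - cgf X μ η := by
  set q := deriv (cgf X μ) η
  have hnonneg : 0 ≤ η * q - cgf X μ η := by
    have := deriv_cgf_mul_sub_add_cgf_le hη (t := 0) (by simp [integrableExpSet])
    rw [cgf_zero] at this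
    linarith
  by_cases hbdd : BddAbove (Set.range fun t ↦ t * q - cgf X μ t)
  · refine csSup_le (Set.range_nonempty _) (Set.forall_mem_range.2 fun t ↦ ?_)
    by_cases ht : t ∈ integrableExpSet X μ
    · linarith [deriv_cgf_mul_sub_add_cgf_le hη ht]
    · have htq : t * q ≤ 0 := not_lt.1 fun htq ↦ not_bddAbove_range_mul_sub_cgf ht htq hbdd
      rw [cgf_undef ht]
      linarith
  · rwa [sSup_of_not_bddAbove hbdd]

end LegendreTransform

theorem measureReal_pi_sum_sub_nonneg_le {ν : Measure ℝ} [IsProbabilityMeasure ν]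
    (hVar : 0 < Var[id; ν]) {N : ℕ} (hN : 0 < N) {η : ℝ} (hη : 0 < η)
    (hmem : η ∈ interior (integrableExpSet id ν)) :
    (Measure.pi fun _ ↦ ν).real {z : Fin N → ℝ | 0 ≤ ∑ i, (z i - deriv (cgf id ν) η)} ≤
      exp (-(N * (η * deriv (cgf id ν) η - cgf id ν η))) * (1 / √N *
        ((∫ z, |z - deriv (cgf id ν) η| ^ 3 ∂(ν.tilted (η * id ·))) /
            deriv (deriv (cgf id ν)) η ^ ((3 : ℝ) / 2) +
          1 / (η * √(2 * π * deriv (deriv (cgf id ν)) η)))) := by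
  have hmem' : η ∈ integrableExpSet id ν := interior_subset hmem
  have := isProbabilityMeasure_tilted hmem'
  have hmain := setIntegral_exp_neg_mul_sum_sub_mean_le (memLp_tilted_mul hmem 3)
    (variance_tilted_mul_pos hmem hVar) hN hη
  rw [integral_tilted_mul_self hmem, variance_tilted_mul hmem, iteratedDeriv_succ,
    iteratedDeriv_one] at hmain
  set q := deriv (cgf id ν) η
  have hexp : (fun z : Fin N → ℝ ↦ exp (-(η * ∑ i, z i))) =
      fun z ↦ exp (-(N * (η * q))) * exp (-(η * ∑ i, (z i - q))) := by
    ext z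
    rw [← exp_add]
    simp only [Finset.sum_sub_distrib, Finset.sum_const, Finset.card_univ, Fintype.card_fin,
      nsmul_eq_mul]
    ring_nf
  rw [measureReal_pi_eq_mgf_pow_mul hmem', Fintype.card_fin, ← exp_cgf hmem', ← exp_nat_mul, hexp,
    integral_const_mul, ← mul_assoc, ← exp_add]
  have hexponent : -(N * (η * q - cgf id ν η)) = N * cgf id ν η + -(N * (η * q)) := by ring
  rw [hexponent]
  exact mul_le_mul_of_nonneg_left hmain (exp_pos _).le

theorem tilted_mul_eq_withDensity_exp_sub_cgf {Ω : Type*} [MeasurableSpace Ω] {μ : Measure Ω}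
    {X : Ω → ℝ} [NeZero μ] {t : ℝ} (ht : t ∈ integrableExpSet X μ) :
    μ.tilted (t * X ·) = μ.withDensity fun ω ↦ ENNReal.ofReal (exp (X ω * t - cgf X μ t)) := by
  rw [Measure.tilted]
  congr with ω
  rw [exp_sub, exp_cgf ht, mul_comm t]
  rfl

theorem preimage_mean_Ici {N : ℕ} (hN : 0 < N) (q : ℝ) :
    (fun z : Fin N → ℝ ↦ (∑ i, z i) / N) ⁻¹' Set.Ici q = {z | 0 ≤ ∑ i, (z i - q)} := by
  ext z
  have hN' : (0 : ℝ) < N := by exact_mod_cast hN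
  simp only [Set.mem_preimage, Set.mem_Ici, Set.mem_ofPred_eq, Finset.sum_sub_distrib,
    Finset.sum_const, Finset.card_univ, Fintype.card_fin, nsmul_eq_mul]
  rw [le_div_iff₀ hN', sub_nonneg, mul_comm]

/-- Concentration upper bound for sums of i.i.d. real random variables
(Lemma on exact pre-factor): if `Λ(λ) = log E[e^{λ Z}]` is finite near `η > 0`
with `Λ'(η) = q`, then the law `μ_N` of the empirical mean of `N` i.i.d.
copies of `Z ∼ ν` satisfies
`μ_N([q,∞)) ≤ e^{-N Λ*(q)} N^{-1/2} (m₃/Λ''(η)^{3/2} + 1/(η √(2π Λ''(η))))`,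
where `m₃` is the third absolute central moment under the tilted law `ν̃`. -/
theorem statement19
    (ν : Measure ℝ) [IsProbabilityMeasure ν]
    (hVar : 0 < variance id ν)
    (N : ℕ) (hN : 0 < N)
    (q η : ℝ) (hη : 0 < η)
    (Λ : ℝ → ℝ) (hΛ : Λ = fun t => Real.log (∫ z, Real.exp (t * z) ∂ν))
    (hfin : ∀ᶠ t in nhds η, Integrable (fun z => Real.exp (t * z)) ν)
    (hderiv : deriv Λ η = q)
    (νt : Measure ℝ)
    (hνt : νt = ν.withDensity fun z => ENNReal.ofReal (Real.exp (z * η - Λ η)))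
    (m3 : ℝ) (hm3 : m3 = ∫ z, |z - deriv Λ η| ^ 3 ∂νt)
    (Λstar : ℝ) (hΛstar : Λstar = sSup (Set.range fun t => t * q - Λ t)) :
    (((Measure.pi fun _ : Fin N => ν).map
        (fun z : Fin N → ℝ => (∑ i, z i) / N)) (Set.Ici q)).toReal ≤
      Real.exp (-(N : ℝ) * Λstar) * (1 / Real.sqrt N) *
        (m3 / deriv (deriv Λ) η ^ ((3 : ℝ) / 2) +
          1 / (η * Real.sqrt (2 * π * deriv (deriv Λ) η))) := by
  obtain rfl : Λ = cgf id ν := hΛ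
  have hmem : η ∈ interior (integrableExpSet id ν) := mem_interior_iff_mem_nhds.2 hfin
  have htilted : νt = ν.tilted (η * id ·) :=
    hνt.trans (tilted_mul_eq_withDensity_exp_sub_cgf (interior_subset hmem)).symm
  subst hderiv
  have hstar : Λstar ≤ η * deriv (cgf id ν) η - cgf id ν η :=
    hΛstar ▸ sSup_range_mul_deriv_cgf_sub_cgf_le hmem
  have hbound := measureReal_pi_sum_sub_nonneg_le hVar hN hη hmem
  rw [← htilted, ← hm3] at hbound
  rw [Measure.map_apply (by fun_prop) measurableSet_Ici, preimage_mean_Ici hN, mul_assoc, neg_mul]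
  have hnonneg := (mul_nonneg_iff_of_pos_left (exp_pos _)).1 (measureReal_nonneg.trans hbound)
  refine hbound.trans (mul_le_mul_of_nonneg_right ?_ hnonneg)
  gcongr
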